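/- arXiv:2107.08830 — 3 statements merged into one kernel-verified Lean document; each statement's English description precedes it below -/
import Mathlib

section
/- Let λ ∈ ℂ with Re λ < 0 and write λ₁ = −Re λ > 0. Let γ denote the Euler–Mascheroni constant and let t₀ > e^{1−γ}. Define f₁ : (0,1) → ℂ by f₁(ρ) = −1/(λ · t₀^ρ · Γ(1−ρ)), where Γ is the Gamma function. Then for every ρ ∈ (0,1) the function f₁ is differentiable at ρ and −Re(f₁′(ρ)) ≥ λ₁ / (|λ|² · t₀^ρ). -/
/-!
Let `ψ` be the logarithmic derivative of `Γ` and `s = 1 - ρ`. The derivative of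
`(t ^ ρ Γ(1 - ρ))⁻¹` in `ρ` is `(ψ(s) - log t) / (t ^ ρ Γ(s))`, so the estimate amounts to
`Γ(s) + ψ(s) ≤ log t`. Shifting by one removes the singularity at `s = 0`: we have
`Γ(s) = Γ(s + 1) / s` and `ψ(s) = ψ(s + 1) - 1 / s`. On `[1, 2]` convexity gives `Γ ≤ 1`, and
log-convexity gives `ψ ≤ ψ(2) = 1 - γ`. The two terms `1 / s` cancel, leaving
`Γ(s) + ψ(s) ≤ 1 - γ` for `0 < s ≤ 1`.
-/

section

open Real Set
open scoped Topology

lemma Gamma_le_one_of_mem_Icc {s : ℝ} (hs : s ∈ Icc 1 2) : Gamma s ≤ 1 := by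
  simpa only [Gamma_one, Gamma_two, max_self] using
    convexOn_Gamma.le_max_of_mem_Icc (mem_Ioi.2 one_pos) (mem_Ioi.2 two_pos) hs

lemma logDeriv_Gamma_add_one {s : ℝ} (hs : ∀ m : ℕ, s ≠ -m) :
    logDeriv Gamma (s + 1) = logDeriv Gamma s + s⁻¹ := by
  have hs₀ : s ≠ 0 := by simpa only [Nat.cast_zero, neg_zero] using hs 0
  have hrec : (fun x ↦ Gamma (x + 1)) =ᶠ[𝓝 s] fun x ↦ x * Gamma x := by
    filter_upwards [eventually_ne_nhds hs₀] with x hx using Gamma_add_one hx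
  calc logDeriv Gamma (s + 1)
      = logDeriv (fun x ↦ Gamma (x + 1)) s := by
        rw [logDeriv_apply, logDeriv_apply, deriv_comp_add_const]
    _ = logDeriv (fun x ↦ x * Gamma x) s := (logDeriv_congr_nhds hrec).eq_of_nhds
    _ = logDeriv (fun x ↦ x) s + logDeriv Gamma s :=
        logDeriv_mul s hs₀ (Gamma_ne_zero hs) differentiableAt_id (differentiableAt_Gamma hs)
    _ = logDeriv Gamma s + s⁻¹ := by rw [logDeriv_id', one_div, add_comm]

lemma monotoneOn_logDeriv_Gamma : MonotoneOn (logDeriv Gamma) (Ioi 0) := by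
  have hdiff (x : ℝ) (hx : x ∈ Ioi 0) : DifferentiableAt ℝ Gamma x :=
    differentiableOn_Gamma_Ioi.differentiableAt (Ioi_mem_nhds hx)
  have hne (x : ℝ) (hx : x ∈ Ioi 0) : Gamma x ≠ 0 := (Gamma_pos_of_pos hx).ne'
  refine (convexOn_log_Gamma.monotoneOn_deriv fun x hx ↦ (hdiff x hx).log (hne x hx)).congr ?_
  exact fun x hx ↦ deriv_log_comp_eq_logDeriv (hdiff x hx) (hne x hx)

lemma logDeriv_Gamma_two : logDeriv Gamma 2 = 1 - eulerMascheroniConstant := by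
  have hpole (m : ℕ) : (1 : ℝ) ≠ -m := by linarith [m.cast_nonneg (α := ℝ)]
  rw [← one_add_one_eq_two, logDeriv_Gamma_add_one hpole, logDeriv_apply,
    hasDerivAt_Gamma_one.deriv, Gamma_one]
  ring

lemma Gamma_add_logDeriv_Gamma_le {s : ℝ} (hs : s ∈ Ioc 0 1) :
    Gamma s + logDeriv Gamma s ≤ 1 - eulerMascheroniConstant := by
  obtain ⟨hs₀, hs₁⟩ := hs
  have hpole (m : ℕ) : s ≠ -m := by linarith [m.cast_nonneg (α := ℝ)]
  have hGamma : Gamma s ≤ s⁻¹ := by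
    have hle : Gamma (s + 1) ≤ 1 := Gamma_le_one_of_mem_Icc ⟨by linarith, by linarith⟩
    rwa [Gamma_add_one hs₀.ne', ← le_div_iff₀' hs₀, one_div] at hle
  have hlogDeriv : logDeriv Gamma s + s⁻¹ ≤ 1 - eulerMascheroniConstant := by
    rw [← logDeriv_Gamma_add_one hpole, ← logDeriv_Gamma_two]
    exact monotoneOn_logDeriv_Gamma (mem_Ioi.2 (by linarith)) (mem_Ioi.2 two_pos) (by linarith)
  linarith

lemma hasDerivAt_inv_rpow_mul_Gamma_one_sub {t ρ : ℝ} (ht : 0 < t) (hρ : ∀ m : ℕ, 1 - ρ ≠ -m) :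
    HasDerivAt (fun x ↦ (t ^ x * Gamma (1 - x))⁻¹)
      ((logDeriv Gamma (1 - ρ) - log t) / (t ^ ρ * Gamma (1 - ρ))) ρ := by
  have hpow : HasDerivAt (fun x ↦ t ^ x) (t ^ ρ * log t) ρ :=
    (hasStrictDerivAt_const_rpow ht ρ).hasDerivAt
  have hGamma : HasDerivAt (fun x ↦ Gamma (1 - x)) (-deriv Gamma (1 - ρ)) ρ :=
    (differentiableAt_Gamma hρ).hasDerivAt.comp_const_sub 1 ρ
  have htρ : t ^ ρ ≠ 0 := (rpow_pos_of_pos ht ρ).ne'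
  have hΓ : Gamma (1 - ρ) ≠ 0 := Gamma_ne_zero hρ
  refine ((hpow.mul hGamma).inv (mul_ne_zero htρ hΓ)).congr_deriv ?_
  simp only [logDeriv_apply, Pi.mul_apply]
  field_simp
  ring

lemma inv_rpow_le_log_sub_logDeriv_Gamma_div {t ρ : ℝ}
    (ht : exp (1 - eulerMascheroniConstant) ≤ t) (hρ : ρ ∈ Ico 0 1) :
    (t ^ ρ)⁻¹ ≤ (log t - logDeriv Gamma (1 - ρ)) / (t ^ ρ * Gamma (1 - ρ)) := by
  have ht₀ : 0 < t := (exp_pos _).trans_le ht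
  have hlog : 1 - eulerMascheroniConstant ≤ log t := (le_log_iff_exp_le ht₀).2 ht
  have hΓ : 0 < Gamma (1 - ρ) := Gamma_pos_of_pos (by linarith [hρ.2])
  have hle : Gamma (1 - ρ) + logDeriv Gamma (1 - ρ) ≤ 1 - eulerMascheroniConstant :=
    Gamma_add_logDeriv_Gamma_le ⟨by linarith [hρ.2], by linarith [hρ.1]⟩
  rw [mul_comm, ← div_div, inv_eq_one_div]
  gcongr
  rw [one_le_div hΓ]
  linarith

lemma hasDerivAt_neg_one_div_mul_rpow_mul_Gamma_one_sub (l : ℂ) {t ρ : ℝ} (ht : 0 < t)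
    (hρ : ∀ m : ℕ, 1 - ρ ≠ -m) :
    HasDerivAt (fun x : ℝ ↦ -1 / (l * ((t ^ x : ℝ) : ℂ) * ((Gamma (1 - x) : ℝ) : ℂ)))
      (l⁻¹ * (((log t - logDeriv Gamma (1 - ρ)) / (t ^ ρ * Gamma (1 - ρ)) : ℝ) : ℂ)) ρ := by
  have hderiv := (hasDerivAt_inv_rpow_mul_Gamma_one_sub ht hρ).ofReal_comp.const_mul (-l⁻¹)
  refine (hderiv.congr_of_eventuallyEq (.of_forall fun x ↦ ?_)).congr_deriv ?_
  · simp only [Complex.ofReal_inv, Complex.ofReal_mul]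
    rw [mul_assoc, neg_div, one_div, mul_inv l, neg_mul]
  · rw [← neg_sub (log t), neg_div, Complex.ofReal_neg, neg_mul_neg]

end

/-- **Estimate (Rf1).** For `λ ∈ ℂ` with `λ₁ = −Re λ > 0` and
`t₀ > e^{1−γ}` (with `γ` the Euler–Mascheroni constant), the function
`f₁(ρ) = −1/(λ t₀^ρ Γ(1−ρ))` is differentiable on `(0,1)` and satisfies
`−Re f₁′(ρ) ≥ λ₁ / (|λ|² t₀^ρ)`. -/
theorem f1_derivative_estimate (l : ℂ) (hl : l.re < 0)
    (t₀ : ℝ) (ht₀ : Real.exp (1 - Real.eulerMascheroniConstant) < t₀) :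
    ∀ ρ ∈ Set.Ioo (0 : ℝ) 1,
      DifferentiableAt ℝ
        (fun ρ : ℝ => -1 / (l * ((t₀ ^ ρ : ℝ) : ℂ) * ((Real.Gamma (1 - ρ) : ℝ) : ℂ))) ρ ∧
      (-l.re) / (‖l‖ ^ 2 * t₀ ^ ρ) ≤
        -(deriv (fun ρ : ℝ =>
            -1 / (l * ((t₀ ^ ρ : ℝ) : ℂ) * ((Real.Gamma (1 - ρ) : ℝ) : ℂ))) ρ).re := by
  intro ρ hρ
  have ht_pos : 0 < t₀ := (Real.exp_pos _).trans ht₀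
  have hpole (m : ℕ) : 1 - ρ ≠ -m := by linarith [hρ.2, m.cast_nonneg (α := ℝ)]
  have hderiv := hasDerivAt_neg_one_div_mul_rpow_mul_Gamma_one_sub l ht_pos hpole
  refine ⟨hderiv.differentiableAt, ?_⟩
  have hbound := inv_rpow_le_log_sub_logDeriv_Gamma_div ht₀.le ⟨hρ.1.le, hρ.2⟩
  have hcoeff : 0 ≤ -l.re / ‖l‖ ^ 2 := div_nonneg (neg_nonneg.2 hl.le) (sq_nonneg _)
  rw [hderiv.deriv, Complex.re_mul_ofReal, Complex.inv_re, Complex.normSq_eq_norm_sq, ← neg_mul,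
    ← neg_div, ← div_div, div_eq_mul_inv _ (t₀ ^ ρ)]
  exact mul_le_mul_of_nonneg_left hbound hcoeff
end

section
/- Let 0 < β₀ < 1, let λ ∈ ℂ with Re λ < 0, write λ₁ = −Re λ > 0, and let γ denote the Euler–Mascheroni constant. Then there exists a constant C > 0 (depending only on λ and β₀) such that for every t₀ > e^{1−γ} and every ρ ∈ [β₀, 1), the function ρ ↦ E_ρ(λ·t₀^ρ) is differentiable at ρ and Re(d/dρ [E_ρ(λ·t₀^ρ)]) < −λ₁/(|λ|²·t₀^ρ) + C·(1/ρ + ln t₀)/(|λ|·t₀^ρ)². -/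
/-- The (one-parameter) Mittag-Leffler function `E_β(z) = ∑ₖ zᵏ / Γ(βk + 1)`. -/
noncomputable def mittagLeffler (β : ℝ) (z : ℂ) : ℂ :=
  ∑' k : ℕ, z ^ k / Complex.Gamma (β * k + 1)

/-!
In the coordinate `s = e^w`, Hankel's integral `∫ e^{ts} s^{c-1} ds = 2πi t^{-c} / Γ(1 - c)` is an
integral of the entire function `exp (t e^w + c w)`. Summing a geometric series on a Hankel
contour far from the origin gives `2πi E_ρ(λ t^ρ) = ∫ e^{ts} s^{ρ-1} / (s^ρ - λ) ds`, and since
`|arg λ| > π/2` the contour can then be collapsed onto two rays `arg s = ±θ` with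
`π/2 < θ < |arg λ|`, on which `|s^ρ - λ| ≥ κ (|s^ρ| + |λ|)`. Splitting
`u / (u - λ) = -u / λ + u² / (λ (u - λ))` at `u = s^ρ` isolates the main term
`-λ⁻¹ t^{-ρ} / Γ(1 - ρ)`, whose `ρ`-derivative is controlled by `ψ ≤ 1 - γ` on `(0, 2]`; the
`ρ`-derivative of the remainder is `O((1 + log t) / (|λ| t^ρ)²)`.
-/

open MeasureTheory Set Filter Topology
open scoped Real Complex
open Complex (I)

namespace MittagLeffler

section LogGammaWeight

/-- Up to normalisation, the density of the logarithm of a Gamma variable of shape `c` and rate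
`δ`. It is the modulus on a ray of the integrand `e^{ts} s^{c-1} ds` in the coordinate `s = e^w`. -/
noncomputable def logGammaWeight (c δ x : ℝ) : ℝ := Real.exp (c * x - δ * Real.exp x)

variable {a c δ t x : ℝ}

lemma logGammaWeight_pos : 0 < logGammaWeight c δ x := Real.exp_pos _

@[fun_prop]
lemma continuous_logGammaWeight : Continuous (logGammaWeight c δ) := by
  unfold logGammaWeight
  fun_prop

lemma integral_exp_smul_comp_exp {E : Type*} [NormedAddCommGroup E] [NormedSpace ℝ E]
    (g : ℝ → E) : ∫ x : ℝ, Real.exp x • g (Real.exp x) = ∫ r in Ioi 0, g r := by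
  have h := integral_image_eq_integral_abs_deriv_smul MeasurableSet.univ
    (fun x _ ↦ (Real.hasDerivAt_exp x).hasDerivWithinAt) Real.exp_injective.injOn g
  simpa [Real.range_exp, Real.abs_exp] using h.symm

lemma integral_cexp_mul_sub_mul_exp_ofReal {c : ℂ} {r : ℝ} (hc : 0 < c.re) (hr : 0 < r) :
    ∫ x : ℝ, cexp (c * x - r * Real.exp x) = (1 / r) ^ c * Complex.Gamma c := by
  rw [← Complex.integral_cpow_mul_exp_neg_mul_Ioi hc hr, ← integral_exp_smul_comp_exp]
  congr 1 with x
  rw [Complex.cpow_def_of_ne_zero (by exact_mod_cast (Real.exp_pos x).ne'),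
    ← Complex.ofReal_log (Real.exp_pos x).le, Real.log_exp, Complex.real_smul,
    Complex.ofReal_exp x, ← Complex.exp_add, ← Complex.exp_add]
  congr 1
  ring

lemma norm_cexp_mul_sub_mul_exp (c a : ℂ) (x : ℝ) :
    ‖cexp (c * x - a * Real.exp x)‖ = logGammaWeight c.re a.re x := by
  simp [Complex.norm_exp, logGammaWeight, Complex.exp_ofReal_re]

lemma integrable_logGammaWeight (hc : 0 < c) (hδ : 0 < δ) : Integrable (logGammaWeight c δ) := by
  have h : Integrable fun x : ℝ ↦ cexp (c * x - δ * Real.exp x) := by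
    refine .of_integral_ne_zero ?_
    rw [integral_cexp_mul_sub_mul_exp_ofReal (by simpa) hδ]
    exact mul_ne_zero (by simp [Complex.cpow_eq_zero_iff, hδ.ne'])
      (Complex.Gamma_ne_zero_of_re_pos (by simpa))
  refine h.norm.congr (.of_forall fun x ↦ ?_)
  simp only [norm_cexp_mul_sub_mul_exp, Complex.ofReal_re]

lemma integrable_cexp_mul_sub_mul_exp {a c : ℂ} (ha : 0 < a.re) (hc : 0 < c.re) :
    Integrable fun x : ℝ ↦ cexp (c * x - a * Real.exp x) :=
  (integrable_logGammaWeight hc ha).mono' (by fun_prop)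
    (.of_forall fun x ↦ (norm_cexp_mul_sub_mul_exp c a x).le)

lemma differentiableOn_integral_cexp_mul_sub_mul_exp {c : ℂ} (hc : 0 < c.re) :
    DifferentiableOn ℂ (fun a ↦ ∫ x : ℝ, cexp (c * x - a * Real.exp x)) {a | 0 < a.re} := by
  intro a (ha : 0 < a.re)
  have hnhds : {b : ℂ | a.re / 2 < b.re} ∈ 𝓝 a :=
    (isOpen_lt continuous_const Complex.continuous_re).mem_nhds (half_lt_self ha)
  refine (hasDerivAt_integral_of_dominated_loc_of_deriv_le
    (F' := fun b x ↦ cexp (c * x - b * Real.exp x) * -Real.exp x)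
    (bound := logGammaWeight (c.re + 1) (a.re / 2)) hnhds (.of_forall fun b ↦ by fun_prop)
    (integrable_cexp_mul_sub_mul_exp ha hc) (by fun_prop) (.of_forall fun x b hb ↦ ?_)
    (integrable_logGammaWeight (by positivity) (by positivity)) (.of_forall fun x b _ ↦ ?_)
    ).2.differentiableAt.differentiableWithinAt
  · rw [norm_mul, norm_cexp_mul_sub_mul_exp, norm_neg, Complex.norm_real,
      Real.norm_of_nonneg (Real.exp_pos x).le, logGammaWeight, ← Real.exp_add, logGammaWeight]
    have := mul_le_mul_of_nonneg_right (le_of_lt hb) (Real.exp_pos x).le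
    gcongr
    linarith
  · simpa using (((hasDerivAt_id b).mul_const (Real.exp x : ℂ)).const_sub (c * x)).cexp

/-- The rate `a` is complex: for `r > 0` this is a substitution in Euler's integral, and the general
case follows by the identity theorem in `a`. -/
lemma integral_cexp_mul_sub_mul_exp {a c : ℂ} (ha : 0 < a.re) (hc : 0 < c.re) :
    ∫ x : ℝ, cexp (c * x - a * Real.exp x) = (1 / a) ^ c * Complex.Gamma c := by
  have hopen : IsOpen {a : ℂ | 0 < a.re} := isOpen_lt continuous_const Complex.continuous_re
  have hpow : DifferentiableOn ℂ (fun a : ℂ ↦ (1 / a) ^ c * Complex.Gamma c) {a | 0 < a.re} := by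
    intro b (hb : 0 < b.re)
    have hb0 : b ≠ 0 := by rintro rfl; simp at hb
    have hinv : 1 / b ∈ Complex.slitPlane := by
      rw [one_div, Complex.mem_slitPlane_iff, Complex.inv_re]
      exact .inl (div_pos hb (Complex.normSq_pos.2 hb0))
    exact ((((differentiableAt_const 1).div differentiableAt_id hb0).cpow_const hinv).mul_const
      _).differentiableWithinAt
  have hreal : ∃ᶠ b in 𝓝[≠] (1 : ℂ),
      ∫ x : ℝ, cexp (c * x - b * Real.exp x) = (1 / b) ^ c * Complex.Gamma c := by
    have hcoe : Tendsto ((↑) : ℝ → ℂ) (𝓝[>] 1) (𝓝[≠] 1) :=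
      Complex.continuous_ofReal.continuousWithinAt.tendsto_nhdsWithin
        fun r hr ↦ by simpa using (mem_Ioi.1 hr).ne'
    exact hcoe.frequently (eventually_mem_nhdsWithin.mono fun r hr ↦
      integral_cexp_mul_sub_mul_exp_ofReal hc (one_pos.trans (mem_Ioi.1 hr))).frequently
  exact ((differentiableOn_integral_cexp_mul_sub_mul_exp hc).analyticOnNhd hopen
    ).eqOn_of_preconnected_of_frequently_eq (hpow.analyticOnNhd hopen)
    (convex_halfSpace_re_gt 0).isPreconnected (by simp) hreal ha

lemma exp_mul_abs_mul_logGammaWeight_le (b : ℝ) : Real.exp (b * |x|) * logGammaWeight c δ x ≤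
    logGammaWeight (c + b) δ x + logGammaWeight (c - b) δ x := by
  have hadd : ∀ y, Real.exp y * logGammaWeight c δ x = Real.exp (c * x + y - δ * Real.exp x) :=
    fun y ↦ by rw [logGammaWeight, ← Real.exp_add]; ring_nf
  rw [hadd, logGammaWeight, logGammaWeight]
  rcases abs_cases x with ⟨h, -⟩ | ⟨h, -⟩ <;> rw [h]
  · exact le_add_of_le_of_nonneg (Real.exp_le_exp.2 (by linarith)) (Real.exp_pos _).le
  · exact le_add_of_nonneg_of_le (Real.exp_pos _).le (Real.exp_le_exp.2 (by linarith))

lemma integrable_abs_add_mul_logGammaWeight (a : ℝ) (hc : 0 < c) (hδ : 0 < δ) :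
    Integrable fun x ↦ (|x| + a) * logGammaWeight c δ x := by
  simp_rw [add_mul]
  refine .add ?_ ((integrable_logGammaWeight hc hδ).const_mul a)
  have hdom := ((integrable_logGammaWeight (c := c + c / 2) (by linarith) hδ).add
    (integrable_logGammaWeight (c := c - c / 2) (by linarith) hδ)).const_mul (2 / c)
  refine hdom.mono' (by fun_prop) (.of_forall fun x ↦ ?_)
  rw [Real.norm_of_nonneg (mul_nonneg (abs_nonneg x) logGammaWeight_pos.le)]
  have habs : |x| ≤ 2 / c * Real.exp (c / 2 * |x|) := by
    rw [div_mul_eq_mul_div, le_div_iff₀ hc]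
    linarith [Real.add_one_le_exp (c / 2 * |x|)]
  calc |x| * logGammaWeight c δ x
      ≤ 2 / c * Real.exp (c / 2 * |x|) * logGammaWeight c δ x := by
        gcongr; exact logGammaWeight_pos.le
    _ ≤ 2 / c * (logGammaWeight (c + c / 2) δ x + logGammaWeight (c - c / 2) δ x) := by
        rw [mul_assoc]; gcongr; exact exp_mul_abs_mul_logGammaWeight_le _

lemma logGammaWeight_le_add {c₀ c₁ : ℝ} (h₀ : c₀ ≤ c) (h₁ : c ≤ c₁) :
    logGammaWeight c δ x ≤ logGammaWeight c₀ δ x + logGammaWeight c₁ δ x := by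
  unfold logGammaWeight
  rcases le_total 0 x with hx | hx
  · exact le_add_of_nonneg_of_le (Real.exp_pos _).le (by gcongr)
  · exact le_add_of_le_of_nonneg
      (Real.exp_le_exp.2 (by linarith [mul_le_mul_of_nonpos_right h₀ hx])) (Real.exp_pos _).le

lemma logGammaWeight_sub_log (ht : 0 < t) :
    logGammaWeight c (t * δ) (x - Real.log t) = t ^ (-c) * logGammaWeight c δ x := by
  have hexp : Real.exp (x - Real.log t) = Real.exp x / t := by rw [Real.exp_sub, Real.exp_log ht]
  rw [logGammaWeight, logGammaWeight, Real.rpow_def_of_pos ht, ← Real.exp_add, hexp]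
  congr 1
  field_simp
  ring

lemma integral_abs_add_mul_logGammaWeight_mul_le (ha : 1 ≤ a) (hc : 0 < c) (hδ : 0 < δ)
    (ht : 1 ≤ t) : ∫ x, (|x| + a) * logGammaWeight c (t * δ) x ≤
      (1 + Real.log t) * t ^ (-c) * ∫ x, (|x| + a) * logGammaWeight c δ x := by
  have ht0 : 0 < t := by linarith
  have hlog := Real.log_nonneg ht
  rw [← integral_sub_right_eq_self _ (Real.log t), ← integral_const_mul]
  refine integral_mono_of_nonneg (.of_forall fun x ↦ ?_)
    ((integrable_abs_add_mul_logGammaWeight a hc hδ).const_mul _) (.of_forall fun x ↦ ?_)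
  · exact mul_nonneg (by positivity) logGammaWeight_pos.le
  have habs : |x - Real.log t| + a ≤ (1 + Real.log t) * (|x| + a) := by
    have := abs_sub x (Real.log t)
    rw [abs_of_nonneg hlog] at this
    nlinarith [mul_nonneg hlog (abs_nonneg x)]
  have hpos := mul_nonneg (Real.rpow_pos_of_pos ht0 (-c)).le
    (logGammaWeight_pos (c := c) (δ := δ) (x := x)).le
  simp only [logGammaWeight_sub_log ht0]
  calc _ ≤ (1 + Real.log t) * (|x| + a) * (t ^ (-c) * logGammaWeight c δ x) := by gcongr
    _ = _ := by ring

lemma exists_integral_abs_add_mul_logGammaWeight_le {c₀ : ℝ} (c₁ : ℝ) (ha : 1 ≤ a) (hc₀ : 0 < c₀)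
    (hδ : 0 < δ) : ∃ M, 0 < M ∧ ∀ t, 1 ≤ t → ∀ c ∈ Icc c₀ c₁,
      ∫ x, (|x| + a) * logGammaWeight c (t * δ) x ≤ M * (1 + Real.log t) * t ^ (-c) := by
  let J : ℝ → ℝ := fun c ↦ ∫ x, (|x| + a) * logGammaWeight c δ x
  have hJ : ∀ c, 0 ≤ J c := fun c ↦
    integral_nonneg fun x ↦ mul_nonneg (by positivity) logGammaWeight_pos.le
  refine ⟨J c₀ + J c₁ + 1, by linarith [hJ c₀, hJ c₁], fun t ht c ⟨h₀, h₁⟩ ↦ ?_⟩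
  have hint : ∀ c, c₀ ≤ c → Integrable fun x ↦ (|x| + a) * logGammaWeight c δ x :=
    fun c hc ↦ integrable_abs_add_mul_logGammaWeight a (hc₀.trans_le hc) hδ
  have hJc : J c ≤ J c₀ + J c₁ := by
    rw [← integral_add (hint c₀ le_rfl) (hint c₁ (h₀.trans h₁))]
    refine integral_mono (hint c h₀) ((hint c₀ le_rfl).add (hint c₁ (h₀.trans h₁))) fun x ↦ ?_
    rw [← mul_add]
    gcongr
    exact logGammaWeight_le_add h₀ h₁
  have hlog := Real.log_nonneg ht
  calc ∫ x, (|x| + a) * logGammaWeight c (t * δ) x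
      ≤ (1 + Real.log t) * t ^ (-c) * J c :=
        integral_abs_add_mul_logGammaWeight_mul_le ha (hc₀.trans_le h₀) hδ ht
    _ ≤ (1 + Real.log t) * t ^ (-c) * (J c₀ + J c₁ + 1) := by gcongr; linarith
    _ = _ := by ring

end LogGammaWeight

section RealGamma

lemma differentiableAt_Gamma_of_pos {s : ℝ} (hs : 0 < s) : DifferentiableAt ℝ Real.Gamma s :=
  Real.differentiableAt_Gamma fun m ↦ by linarith [m.cast_nonneg (α := ℝ)]

lemma monotoneOn_logDeriv_Gamma : MonotoneOn (logDeriv Real.Gamma) (Ioi 0) := by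
  have hlog : ∀ s ∈ Ioi (0 : ℝ), HasDerivAt (Real.log ∘ Real.Gamma) (logDeriv Real.Gamma s) s :=
    fun s hs ↦ (differentiableAt_Gamma_of_pos hs).hasDerivAt.log (Real.Gamma_pos_of_pos hs).ne'
  exact (Real.convexOn_log_Gamma.monotoneOn_deriv fun s hs ↦ (hlog s hs).differentiableAt).congr
    fun s hs ↦ (hlog s hs).deriv

lemma logDeriv_Gamma_two : logDeriv Real.Gamma 2 = 1 - Real.eulerMascheroniConstant := by
  have h := Real.deriv_Gamma_nat 1
  norm_num at h
  rw [logDeriv_apply, h, Real.Gamma_two, div_one]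
  ring

lemma Gamma_le_one_of_mem_Icc {s : ℝ} (hs : s ∈ Icc 1 2) : Real.Gamma s ≤ 1 := by
  have h := Real.convexOn_Gamma.le_max_of_mem_Icc (mem_Ioi.2 one_pos) (mem_Ioi.2 two_pos) hs
  simpa using h

lemma inv_Gamma_eq_div_Gamma_add_one (s : ℝ) : (Real.Gamma s)⁻¹ = s / Real.Gamma (s + 1) := by
  rcases eq_or_ne s 0 with rfl | hs
  · simp [Real.Gamma_zero]
  · rw [Real.Gamma_add_one hs, div_mul_cancel_left₀ hs]

lemma hasDerivAt_rpow_neg_div_Gamma_one_sub {t ρ : ℝ} (ht : 0 < t) (hρ : ρ < 2) :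
    HasDerivAt (fun ρ ↦ t ^ (-ρ) / Real.Gamma (1 - ρ))
      (-(t ^ (-ρ) * ((1 + (1 - ρ) * (Real.log t - logDeriv Real.Gamma (2 - ρ))) /
        Real.Gamma (2 - ρ)))) ρ := by
  have hpos : 0 < 2 - ρ := by linarith
  have hΓ := (Real.Gamma_pos_of_pos hpos).ne'
  have hrpow : HasDerivAt (fun ρ ↦ t ^ (-ρ)) (-(Real.log t * t ^ (-ρ))) ρ := by
    simpa using (hasDerivAt_neg ρ).const_rpow ht
  have hGamma : HasDerivAt (fun ρ ↦ Real.Gamma (2 - ρ)) (-deriv Real.Gamma (2 - ρ)) ρ := by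
    simpa using (differentiableAt_Gamma_of_pos hpos).hasDerivAt.comp_const_sub 2 ρ
  have hfun : (fun ρ ↦ t ^ (-ρ) / Real.Gamma (1 - ρ)) =
      fun ρ ↦ t ^ (-ρ) * ((1 - ρ) / Real.Gamma (2 - ρ)) := by
    ext ρ
    rw [div_eq_mul_inv, inv_Gamma_eq_div_Gamma_add_one]
    ring_nf
  rw [hfun]
  refine (hrpow.mul (((hasDerivAt_id ρ).const_sub 1).div hGamma hΓ)).congr_deriv ?_
  simp only [logDeriv_apply, id, Pi.div_apply]
  field_simp
  ring

lemma deriv_rpow_neg_div_Gamma_one_sub_lt {t ρ : ℝ}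
    (ht : Real.exp (1 - Real.eulerMascheroniConstant) < t) (hρ : ρ ∈ Ico 0 1) :
    deriv (fun ρ ↦ t ^ (-ρ) / Real.Gamma (1 - ρ)) ρ < -t ^ (-ρ) := by
  obtain ⟨hρ0, hρ1⟩ := hρ
  have ht0 : 0 < t := (Real.exp_pos _).trans ht
  have hdigamma : logDeriv Real.Gamma (2 - ρ) < Real.log t := calc
    logDeriv Real.Gamma (2 - ρ) ≤ logDeriv Real.Gamma 2 :=
      monotoneOn_logDeriv_Gamma (mem_Ioi.2 (by linarith)) (mem_Ioi.2 two_pos) (by linarith)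
    _ = 1 - Real.eulerMascheroniConstant := logDeriv_Gamma_two
    _ < Real.log t := (Real.lt_log_iff_exp_lt ht0).2 ht
  have hΓ : Real.Gamma (2 - ρ) ≤ 1 := Gamma_le_one_of_mem_Icc ⟨by linarith, by linarith⟩
  have hfactor : 1 < (1 + (1 - ρ) * (Real.log t - logDeriv Real.Gamma (2 - ρ))) /
      Real.Gamma (2 - ρ) := by
    rw [one_lt_div (Real.Gamma_pos_of_pos (by linarith))]
    linarith [mul_pos (sub_pos.2 hρ1) (sub_pos.2 hdigamma)]
  rw [(hasDerivAt_rpow_neg_div_Gamma_one_sub ht0 (by linarith)).deriv, neg_lt_neg_iff]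
  exact lt_mul_of_one_lt_right (Real.rpow_pos_of_pos ht0 _) hfactor

end RealGamma

section HankelKernel

/-- The integrand `e^{ts} s^{c-1} ds` of Hankel's integral, in the coordinate `s = e^w`. -/
noncomputable def hankelKernel (t : ℝ) (c w : ℂ) : ℂ := cexp (t * cexp w) * cexp (c * w)

/-- The integral over the line `Im w = θ` minus the one over `Im w = -θ`: the contour that comes in
from infinity at angle `-θ` and leaves at angle `θ`, in the coordinate `s = e^w`. -/
noncomputable def raysIntegral (θ : ℝ) (f : ℂ → ℂ) : ℂ :=
  (∫ x : ℝ, f (x + θ * I)) - ∫ x : ℝ, f (x + (-θ : ℝ) * I)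

variable {t φ θ X : ℝ} {c : ℂ}

@[fun_prop]
lemma differentiable_hankelKernel : Differentiable ℂ (hankelKernel t c) := by
  unfold hankelKernel
  fun_prop

lemma norm_cexp_mul_cexp (t : ℝ) (w : ℂ) :
    ‖cexp (t * cexp w)‖ = logGammaWeight 0 (t * -Real.cos w.im) w.re := by
  simp only [Complex.norm_exp, Complex.re_ofReal_mul, Complex.exp_re, logGammaWeight]
  ring_nf

lemma norm_hankelKernel (t : ℝ) (c w : ℂ) : ‖hankelKernel t c w‖ =
    Real.exp (-(c.im * w.im)) * logGammaWeight c.re (t * -Real.cos w.im) w.re := by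
  rw [hankelKernel, norm_mul, norm_cexp_mul_cexp, Complex.norm_exp, Complex.mul_re, logGammaWeight,
    logGammaWeight, ← Real.exp_add, ← Real.exp_add]
  ring_nf

lemma integral_hankelKernel_add_mul_I {ψ : ℝ} (ht : 0 < t) (hc : 0 < c.re)
    (hψ : cexp (ψ * I) = -1) (hφ : |φ - ψ| < π / 2) :
    ∫ x : ℝ, hankelKernel t c (x + φ * I) = t ^ (-c) * (cexp (c * ψ * I) * Complex.Gamma c) := by
  obtain ⟨hφ₁, hφ₂⟩ := abs_lt.1 hφ
  have ht' : (t : ℂ) ≠ 0 := by exact_mod_cast ht.ne'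
  set a : ℂ := t * cexp ((φ - ψ : ℝ) * I) with ha
  have ha_re : 0 < a.re := by
    rw [ha, Complex.re_ofReal_mul, Complex.exp_ofReal_mul_I_re]
    exact mul_pos ht (Real.cos_pos_of_mem_Ioo ⟨hφ₁, hφ₂⟩)
  have ha_inv : 1 / a = cexp (-(Real.log t + (φ - ψ : ℝ) * I)) := by
    rw [Complex.exp_neg, Complex.exp_add, ← Complex.ofReal_exp, Real.exp_log ht, one_div]
  have ha_cpow : (1 / a) ^ c = t ^ (-c) * cexp (-(c * (φ - ψ : ℝ) * I)) := by
    rw [Complex.cpow_def_of_ne_zero (by rw [ha_inv]; exact Complex.exp_ne_zero _), ha_inv,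
      Complex.log_exp (by simp; linarith [Real.pi_pos]) (by simp; linarith [Real.pi_pos]),
      Complex.cpow_def_of_ne_zero ht', ← Complex.exp_add, Complex.ofReal_log ht.le]
    ring_nf
  have hneg : t * cexp (φ * I) = -a := by
    have : (φ : ℂ) * I = (φ - ψ : ℝ) * I + ψ * I := by push_cast; ring
    rw [ha, this, Complex.exp_add, hψ]
    ring
  have hker : ∀ x : ℝ, hankelKernel t c (x + φ * I) =
      cexp (c * φ * I) * cexp (c * x - a * Real.exp x) := fun x ↦ by
    rw [hankelKernel, Complex.exp_add, mul_left_comm, hneg, Complex.ofReal_exp, ← Complex.exp_add,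
      ← Complex.exp_add]
    ring_nf
  simp_rw [hker]
  rw [integral_const_mul, integral_cexp_mul_sub_mul_exp ha_re hc, ha_cpow, ← mul_assoc,
    mul_left_comm, ← Complex.exp_add, mul_assoc]
  push_cast
  ring_nf

lemma Gamma_mul_sin_pi_mul (hc : 0 < c.re) :
    Complex.Gamma c * Complex.sin (π * c) = π * (Complex.Gamma (1 - c))⁻¹ := by
  have hΓ := Complex.Gamma_ne_zero_of_re_pos hc
  have hrefl := Complex.Gamma_mul_Gamma_one_sub c
  rcases eq_or_ne (Complex.sin (π * c)) 0 with hsin | hsin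
  · have : Complex.Gamma (1 - c) = 0 := by simpa [hsin, hΓ] using hrefl
    simp [hsin, this]
  · have hΓ' : Complex.Gamma (1 - c) ≠ 0 := by
      intro h
      simp [h, hsin, Real.pi_ne_zero, eq_comm] at hrefl
    rw [eq_mul_inv_iff_mul_eq₀ hΓ', mul_right_comm, hrefl, div_mul_cancel₀ _ hsin]

lemma raysIntegral_hankelKernel_of_re_pos (ht : 0 < t) (hθ : π / 2 < θ) (hθπ : θ < π)
    (hc : 0 < c.re) :
    raysIntegral θ (hankelKernel t c) = 2 * π * I * (t ^ (-c) * (Complex.Gamma (1 - c))⁻¹) := by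
  have hneg : cexp ((-π : ℝ) * I) = -1 := by
    rw [Complex.ofReal_neg, neg_mul, Complex.exp_neg, Complex.exp_pi_mul_I]
    norm_num
  rw [raysIntegral,
    integral_hankelKernel_add_mul_I ht hc Complex.exp_pi_mul_I
      (abs_lt.2 ⟨by linarith, by linarith⟩),
    integral_hankelKernel_add_mul_I ht hc hneg (abs_lt.2 ⟨by linarith, by linarith⟩)]
  have hsin : cexp (c * π * I) - cexp (c * (-π : ℝ) * I) = 2 * I * Complex.sin (π * c) := by
    rw [Complex.sin, Complex.ofReal_neg]
    linear_combination (norm := ring_nf)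
      (cexp (c * π * I) - cexp (-(c * π * I))) * Complex.I_sq
  linear_combination t ^ (-c) * Complex.Gamma c * hsin +
    2 * I * t ^ (-c) * Gamma_mul_sin_pi_mul hc

end HankelKernel

section Deformation

/-- Hankel's contour in the coordinate `s = e^w`: the two rays of `raysIntegral θ`, cut off at
`Re w = X` and joined there by the vertical segment, that is, by an arc of radius `e^X`. -/
noncomputable def hankelIntegral (θ X : ℝ) (f : ℂ → ℂ) : ℂ :=
  (∫ x in Ioi X, f (x + θ * I)) - (∫ x in Ioi X, f (x + (-θ : ℝ) * I)) +
    I * ∫ y in (-θ)..θ, f (X + y * I)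

/-- `f` is holomorphic on the strip `|Im w| ≤ θ` and dominated there by a Hankel kernel of positive
exponent. This is what it takes to push Hankel's contour to `Re w → -∞`. -/
structure IsHankelDominated (θ t : ℝ) (f : ℂ → ℂ) : Prop where
  differentiableAt : ∀ w : ℂ, |w.im| ≤ θ → DifferentiableAt ℂ f w
  exists_norm_le : ∃ c > (0 : ℝ), ∃ K, ∀ w : ℂ, |w.im| ≤ θ → ‖f w‖ ≤ K * ‖hankelKernel t c w‖

variable {t θ φ X : ℝ} {c : ℂ} {f : ℂ → ℂ}

lemma isHankelDominated_hankelKernel (hc : 0 < c.re) :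
    IsHankelDominated θ t (hankelKernel t c) where
  differentiableAt := fun _ _ ↦ differentiable_hankelKernel.differentiableAt
  exists_norm_le := by
    refine ⟨c.re, hc, Real.exp (|c.im| * θ), fun w hw ↦ ?_⟩
    simp only [norm_hankelKernel, Complex.ofReal_re, Complex.ofReal_im, zero_mul, neg_zero,
      Real.exp_zero, one_mul]
    gcongr
    · exact logGammaWeight_pos.le
    · exact (neg_le_abs _).trans (by rw [abs_mul]; gcongr)

namespace IsHankelDominated

lemma integrable_ray (hf : IsHankelDominated θ t f) (ht : 0 < t) (hφ : |φ| ≤ θ)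
    (hcos : Real.cos φ < 0) : Integrable fun x : ℝ ↦ f (x + φ * I) := by
  obtain ⟨c, hc, K, hK⟩ := hf.exists_norm_le
  have hcont : Continuous fun x : ℝ ↦ f (x + φ * I) := continuous_iff_continuousAt.2 fun x ↦
    ContinuousAt.comp (f := fun x : ℝ ↦ (x + φ * I : ℂ))
      (hf.differentiableAt _ (by simpa using hφ)).continuousAt (by fun_prop)
  refine ((integrable_logGammaWeight hc (mul_pos ht (neg_pos.2 hcos))).const_mul K).mono'
    hcont.aestronglyMeasurable (.of_forall fun x ↦ ?_)
  simpa [norm_hankelKernel] using hK (x + φ * I) (by simpa using hφ)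

lemma tendsto_integral_vertical (hf : IsHankelDominated θ t f) (ht : 0 < t) (hθ : 0 < θ) :
    Tendsto (fun x : ℝ ↦ ∫ y in (-θ)..θ, f (x + y * I)) atBot (𝓝 0) := by
  obtain ⟨c, hc, K, hK⟩ := hf.exists_norm_le
  have hweight : Tendsto (logGammaWeight c (-t)) atBot (𝓝 0) := by
    refine Real.tendsto_exp_atBot.comp ?_
    exact (tendsto_id.const_mul_atBot hc).atBot_add (Real.tendsto_exp_atBot.const_mul (-t)).neg
  have hbound := (hweight.const_mul |K|).mul_const |θ - -θ|
  rw [mul_zero, zero_mul] at hbound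
  refine squeeze_zero_norm (fun x ↦ ?_) hbound
  refine intervalIntegral.norm_integral_le_of_norm_le_const fun y hy ↦ ?_
  rw [uIoc_of_le (by linarith)] at hy
  refine (hK _ (by simpa [abs_le] using ⟨hy.1.le, hy.2⟩)).trans ?_
  gcongr
  · exact le_abs_self K
  · suffices t * Real.cos y * Real.exp x ≤ t * Real.exp x by
      simpa [norm_hankelKernel, logGammaWeight] using this
    have := Real.cos_le_one y
    gcongr
    exact mul_le_of_le_one_right ht.le this

lemma hankelIntegral_eq_raysIntegral (hf : IsHankelDominated θ t f) (ht : 0 < t) (hθ : π / 2 < θ)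
    (hθπ : θ < π) (X : ℝ) : hankelIntegral θ X f = raysIntegral θ f := by
  have hθ0 : 0 < θ := by linarith [Real.pi_pos]
  have hcos : Real.cos θ < 0 := Real.cos_neg_of_pi_div_two_lt_of_lt hθ (by linarith)
  have hupper := hf.integrable_ray ht (abs_of_pos hθ0).le hcos
  have hlower := hf.integrable_ray ht (φ := -θ) (by rw [abs_neg, abs_of_pos hθ0])
    (by rwa [Real.cos_neg])
  have hrect : ∀ x : ℝ, (∫ u in x..X, f (u + (-θ : ℝ) * I)) - (∫ u in x..X, f (u + θ * I)) +
      I * (∫ y in (-θ)..θ, f (X + y * I)) - I * (∫ y in (-θ)..θ, f (x + y * I)) = 0 := by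
    intro x
    refine Complex.integral_boundary_rect_eq_zero_of_differentiableOn f ⟨x, -θ⟩ ⟨X, θ⟩
      fun w hw ↦ (hf.differentiableAt w (abs_le.2 ?_)).differentiableWithinAt
    simpa [uIcc_of_le (show -θ ≤ θ by linarith)] using hw.2
  have hlim := (((intervalIntegral_tendsto_integral_Iic X hlower.integrableOn tendsto_id).sub
    (intervalIntegral_tendsto_integral_Iic X hupper.integrableOn tendsto_id)).add_const
      (I * ∫ y in (-θ)..θ, f (X + y * I))).sub
        ((hf.tendsto_integral_vertical ht hθ0).const_mul I)
  have hzero := tendsto_nhds_unique hlim (tendsto_const_nhds.congr fun x ↦ (hrect x).symm)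
  rw [hankelIntegral, raysIntegral,
    ← intervalIntegral.integral_Iic_add_Ioi (b := X) hupper.integrableOn hupper.integrableOn,
    ← intervalIntegral.integral_Iic_add_Ioi (b := X) hlower.integrableOn hlower.integrableOn]
  linear_combination hzero

end IsHankelDominated

end Deformation

section ParametricIntegral

variable {α : Type*} [MeasurableSpace α] {μ : Measure α} {k r w : α → ℂ}

lemma integrable_mul_cexp (hk : AEStronglyMeasurable k μ) (hw : AEStronglyMeasurable w μ)
    (hint : ∀ b > 0, Integrable (fun x ↦ Real.exp (b * ‖w x‖) * ‖k x‖) μ) (c : ℂ) :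
    Integrable (fun x ↦ k x * cexp (c * w x)) μ := by
  refine (hint (‖c‖ + 1) (by positivity)).mono'
    (hk.mul (Complex.continuous_exp.comp_aestronglyMeasurable (hw.const_mul c)))
    (.of_forall fun x ↦ ?_)
  rw [norm_mul, mul_comm]
  gcongr
  refine (Complex.norm_exp_le_exp_norm _).trans ?_
  rw [norm_mul]
  gcongr
  linarith

lemma differentiable_integral_mul_cexp (hk : AEStronglyMeasurable k μ)
    (hw : AEStronglyMeasurable w μ)
    (hint : ∀ b > 0, Integrable (fun x ↦ Real.exp (b * ‖w x‖) * ‖k x‖) μ) :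
    Differentiable ℂ fun c ↦ ∫ x, k x * cexp (c * w x) ∂μ := by
  intro c
  have hmeas : ∀ c, AEStronglyMeasurable (fun x ↦ k x * cexp (c * w x)) μ := fun c ↦
    (integrable_mul_cexp hk hw hint c).aestronglyMeasurable
  refine (hasDerivAt_integral_of_dominated_loc_of_deriv_le
    (F' := fun c x ↦ k x * cexp (c * w x) * w x) (Metric.ball_mem_nhds c one_pos)
    (.of_forall hmeas) (integrable_mul_cexp hk hw hint c) ((hmeas c).mul hw)
    (.of_forall fun x b hb ↦ ?_) (hint (‖c‖ + 2) (by positivity))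
    (.of_forall fun x b _ ↦ ?_)).2.differentiableAt
  · have hb' : ‖b‖ ≤ ‖c‖ + 1 := by
      linarith [norm_le_norm_add_norm_sub' b c, mem_ball_iff_norm.1 hb]
    calc ‖k x * cexp (b * w x) * w x‖ = ‖cexp (b * w x)‖ * ‖w x‖ * ‖k x‖ := by
          rw [norm_mul, norm_mul]; ring
      _ ≤ Real.exp ((‖c‖ + 1) * ‖w x‖) * Real.exp ‖w x‖ * ‖k x‖ := by
          gcongr
          · refine (Complex.norm_exp_le_exp_norm _).trans ?_
            rw [norm_mul]
            gcongr
          · linarith [Real.add_one_le_exp ‖w x‖]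
      _ = Real.exp ((‖c‖ + 2) * ‖w x‖) * ‖k x‖ := by
          rw [← Real.exp_add]; ring_nf
  · simpa [mul_assoc] using ((hasDerivAt_mul_const (w x)).cexp (x := b)).const_mul (k x)

lemma hasSum_integral_mul_pow {q : ℝ} (hk : Integrable k μ) (hr : AEStronglyMeasurable r μ)
    (hq₀ : 0 ≤ q) (hq₁ : q < 1) (hrq : ∀ᵐ x ∂μ, ‖r x‖ ≤ q) :
    HasSum (fun n : ℕ ↦ ∫ x, k x * r x ^ n ∂μ) (∫ x, k x * (1 - r x)⁻¹ ∂μ) := by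
  refine hasSum_integral_of_dominated_convergence (fun n x ↦ ‖k x‖ * q ^ n)
    (fun n ↦ hk.aestronglyMeasurable.mul (hr.pow n)) (fun n ↦ ?_)
    (.of_forall fun x ↦ (summable_geometric_of_lt_one hq₀ hq₁).mul_left _) ?_ ?_
  · filter_upwards [hrq] with x hx
    rw [norm_mul, norm_pow]
    gcongr
  · simp_rw [tsum_mul_left]
    exact hk.norm.mul_const _
  · filter_upwards [hrq] with x hx
    exact (hasSum_geometric_of_norm_lt_one (hx.trans_lt hq₁)).mul_left (k x)

end ParametricIntegral

section Hankel

variable {t θ φ X : ℝ}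

lemma integrableOn_exp_mul_norm_mul_norm_cexp (ht : 0 < t) (hX : 0 ≤ X) (hφ : Real.cos φ < 0)
    {b : ℝ} (hb : 0 < b) : IntegrableOn
      (fun x : ℝ ↦ Real.exp (b * ‖(x + φ * I : ℂ)‖) * ‖cexp (t * cexp (x + φ * I))‖) (Ioi X) := by
  have hdom : Integrable fun x ↦
      Real.exp (b * |φ|) * logGammaWeight b (t * -Real.cos φ) x :=
    (integrable_logGammaWeight hb (mul_pos ht (neg_pos.2 hφ))).const_mul _
  refine hdom.integrableOn.mono' (by fun_prop) ?_
  filter_upwards [ae_restrict_mem measurableSet_Ioi] with x hx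
  have hnorm : ‖(x + φ * I : ℂ)‖ ≤ x + |φ| := by
    simpa [abs_of_pos (hX.trans_lt hx)] using norm_add_le (x : ℂ) (φ * I)
  rw [norm_mul, norm_norm, Real.norm_of_nonneg (Real.exp_pos _).le, norm_cexp_mul_cexp]
  calc Real.exp (b * ‖(x + φ * I : ℂ)‖) * logGammaWeight 0 _ _
      ≤ Real.exp (b * (x + |φ|)) * logGammaWeight 0 (t * -Real.cos φ) x := by
        simp only [Complex.add_im, Complex.ofReal_im, Complex.mul_I_im, Complex.ofReal_re,
          Complex.add_re, Complex.mul_I_re, zero_add, neg_zero, add_zero]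
        gcongr
        exact logGammaWeight_pos.le
    _ = Real.exp (b * |φ|) * logGammaWeight b (t * -Real.cos φ) x := by
        rw [logGammaWeight, logGammaWeight, ← Real.exp_add, ← Real.exp_add]
        ring_nf

lemma differentiable_hankelIntegral_hankelKernel (ht : 0 < t) (hX : 0 ≤ X)
    (hcos : Real.cos θ < 0) :
    Differentiable ℂ fun c ↦ hankelIntegral θ X (hankelKernel t c) := by
  have hray : ∀ φ, Real.cos φ < 0 →
      Differentiable ℂ fun c ↦ ∫ x in Ioi X, hankelKernel t c (x + φ * I) := fun φ hφ ↦
    differentiable_integral_mul_cexp (by fun_prop) (by fun_prop) fun b hb ↦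
      integrableOn_exp_mul_norm_mul_norm_cexp ht hX hφ hb
  have hsegment : Differentiable ℂ fun c ↦ ∫ y in (-θ)..θ, hankelKernel t c (X + y * I) := by
    unfold intervalIntegral
    refine .sub ?_ ?_ <;> refine differentiable_integral_mul_cexp (by fun_prop) (by fun_prop)
      fun b _ ↦ (Continuous.integrableOn_Icc (by fun_prop)).mono_set Ioc_subset_Icc_self
  unfold hankelIntegral
  exact ((hray θ hcos).sub (hray (-θ) (by rwa [Real.cos_neg]))).add (hsegment.const_mul I)

/-- Hankel's formula. On `Re c > 0` the contour collapses to the two rays, where the integral is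
Euler's; both sides are entire in `c`. -/
lemma hankelIntegral_hankelKernel (ht : 0 < t) (hX : 0 ≤ X) (hθ : π / 2 < θ) (hθπ : θ < π)
    (c : ℂ) :
    hankelIntegral θ X (hankelKernel t c) = 2 * π * I * (t ^ (-c) * (Complex.Gamma (1 - c))⁻¹) := by
  have ht' : (t : ℂ) ≠ 0 := by exact_mod_cast ht.ne'
  have hcos : Real.cos θ < 0 := Real.cos_neg_of_pi_div_two_lt_of_lt hθ (by linarith)
  have hrhs : Differentiable ℂ fun c : ℂ ↦
      2 * π * I * (t ^ (-c) * (Complex.Gamma (1 - c))⁻¹) := by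
    have hΓ := Complex.differentiable_one_div_Gamma.comp (differentiable_id.const_sub (1 : ℂ))
    have hpow : Differentiable ℂ fun c : ℂ ↦ (t : ℂ) ^ (-c) := fun c ↦
      differentiableAt_id.neg.const_cpow (.inl ht')
    exact (hpow.mul hΓ).const_mul _
  have heq : ∀ᶠ c in 𝓝 (1 : ℂ), hankelIntegral θ X (hankelKernel t c) =
      2 * π * I * (t ^ (-c) * (Complex.Gamma (1 - c))⁻¹) := by
    filter_upwards [(isOpen_lt continuous_const Complex.continuous_re).mem_nhds
      (show (0 : ℝ) < (1 : ℂ).re by simp)] with c hc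
    rw [(isHankelDominated_hankelKernel hc).hankelIntegral_eq_raysIntegral ht hθ hθπ,
      raysIntegral_hankelKernel_of_re_pos ht hθ hθπ hc]
  exact congrFun (AnalyticOnNhd.eq_of_eventuallyEq
    (Complex.analyticOnNhd_univ_iff_differentiable.2
      (differentiable_hankelIntegral_hankelKernel ht hX hcos))
    (Complex.analyticOnNhd_univ_iff_differentiable.2 hrhs) heq) c

end Hankel

section AngleGap

/-- A lower bound for `‖z - l‖ / (‖z‖ + ‖l‖)` over the `z` with `|arg z| ≤ θ`, if `θ ≤ |arg l|`. -/
noncomputable def angleGap (θ : ℝ) (l : ℂ) : ℝ := Real.sin ((|l.arg| - θ) / 2)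

variable {θ ρ : ℝ} {l w z : ℂ}

lemma angleGap_pos (hθ : 0 ≤ θ) (hl : θ < |l.arg|) : 0 < angleGap θ l :=
  Real.sin_pos_of_pos_of_lt_pi (by linarith) (by linarith [l.abs_arg_le_pi, Real.pi_pos])

lemma cos_sub_le_cos_abs_sub_abs {a b : ℝ} (ha : |a| ≤ π) (hb : |b| ≤ π) :
    Real.cos (a - b) ≤ Real.cos (|b| - |a|) := by
  rw [Real.cos_sub, Real.cos_sub, Real.cos_abs, Real.cos_abs,
    ← Real.abs_sin_eq_sin_abs_of_abs_le_pi ha, ← Real.abs_sin_eq_sin_abs_of_abs_le_pi hb,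
    ← abs_mul, mul_comm (Real.cos b), mul_comm (Real.sin b)]
  gcongr
  exact le_abs_self _

lemma norm_sub_sq_eq_cos_arg (z l : ℂ) : ‖z - l‖ ^ 2 =
    ‖z‖ ^ 2 + ‖l‖ ^ 2 - 2 * ‖z‖ * ‖l‖ * Real.cos (z.arg - l.arg) := by
  have hz := z.sq_norm
  have hl := l.sq_norm
  rw [Complex.normSq_apply] at hz hl
  rw [Complex.sq_norm, Complex.normSq_apply, Complex.sub_re, Complex.sub_im, hz, hl, Real.cos_sub]
  linear_combination (2 * ‖l‖ * Real.cos l.arg) * z.norm_mul_cos_arg + 2 * z.re * l.norm_mul_cos_arg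
    + (2 * ‖l‖ * Real.sin l.arg) * z.norm_mul_sin_arg + 2 * z.im * l.norm_mul_sin_arg

lemma angleGap_mul_norm_add_norm_le (hz : |z.arg| ≤ θ) (hl : θ ≤ |l.arg|) :
    angleGap θ l * (‖z‖ + ‖l‖) ≤ ‖z - l‖ := by
  have hπ := l.abs_arg_le_pi
  have hcos : Real.cos (z.arg - l.arg) ≤ Real.cos (|l.arg| - θ) :=
    (cos_sub_le_cos_abs_sub_abs z.abs_arg_le_pi hπ).trans
      (Real.cos_le_cos_of_nonneg_of_le_pi (by linarith) (by linarith [abs_nonneg z.arg])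
        (by linarith))
  refine le_of_sq_le_sq ?_ (norm_nonneg _)
  rw [mul_pow, angleGap, Real.sin_sq_eq_half_sub, mul_div_cancel₀ _ two_ne_zero,
    norm_sub_sq_eq_cos_arg]
  set C := Real.cos (|l.arg| - θ)
  have hC : 0 ≤ (1 + C) / 2 * (‖z‖ - ‖l‖) ^ 2 :=
    mul_nonneg (by linarith [Real.neg_one_le_cos (|l.arg| - θ)]) (sq_nonneg _)
  have := mul_le_mul_of_nonneg_left hcos (by positivity : 0 ≤ 2 * ‖z‖ * ‖l‖)
  nlinarith

lemma angleGap_mul_norm_cexp_add_norm_le (hρ : 0 ≤ ρ) (hρ₁ : ρ ≤ 1) (hl : θ < |l.arg|)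
    (hw : |w.im| ≤ θ) : angleGap θ l * (‖cexp (ρ * w)‖ + ‖l‖) ≤ ‖cexp (ρ * w) - l‖ := by
  have him : |(ρ * w).im| ≤ θ := by
    rw [Complex.im_ofReal_mul, abs_mul, abs_of_nonneg hρ]
    exact (mul_le_of_le_one_left (abs_nonneg _) hρ₁).trans hw
  have hπ := abs_lt.1 ((him.trans_lt hl).trans_le l.abs_arg_le_pi)
  refine angleGap_mul_norm_add_norm_le ?_ hl.le
  rwa [← Complex.log_im, Complex.log_exp hπ.1 hπ.2.le]

lemma cexp_sub_ne_zero (hρ : 0 ≤ ρ) (hρ₁ : ρ ≤ 1) (hl : θ < |l.arg|) (hw : |w.im| ≤ θ) :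
    cexp (ρ * w) - l ≠ 0 := by
  have hpos := mul_pos (angleGap_pos ((abs_nonneg _).trans hw) hl)
    (add_pos_of_pos_of_nonneg (norm_pos_iff.2 (Complex.exp_ne_zero (ρ * w))) (norm_nonneg l))
  exact norm_pos_iff.1 (hpos.trans_le (angleGap_mul_norm_cexp_add_norm_le hρ hρ₁ hl hw))

end AngleGap

section Resolvent

/-- The integrand `e^{ts} s^{ρ-1} / (s^ρ - l) ds` representing the Mittag-Leffler function, in the
coordinate `s = e^w`. -/
noncomputable def resolventKernel (t ρ : ℝ) (l w : ℂ) : ℂ :=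
  cexp (t * cexp w) * (cexp (ρ * w) / (cexp (ρ * w) - l))

variable {t θ X ρ : ℝ} {l w : ℂ}

lemma hasSum_integral_hankelKernel {α : Type*} [MeasurableSpace α] {μ : Measure α} {w : α → ℂ}
    (hρ : 0 ≤ ρ) (hl : ‖l‖ < Real.exp (ρ * X)) (hw : AEStronglyMeasurable w μ)
    (hX : ∀ᵐ x ∂μ, X ≤ (w x).re) (hint : Integrable (fun x ↦ cexp (t * cexp (w x))) μ) :
    HasSum (fun n : ℕ ↦ l ^ n * ∫ x, hankelKernel t (-(ρ * n)) (w x) ∂μ)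
      (∫ x, resolventKernel t ρ l (w x) ∂μ) := by
  have hterm : ∀ (n : ℕ) x, l ^ n * hankelKernel t (-(ρ * n)) (w x) =
      cexp (t * cexp (w x)) * (l * cexp (-(ρ * w x))) ^ n := fun n x ↦ by
    rw [hankelKernel, mul_pow, ← Complex.exp_nat_mul]
    ring_nf
  have hsum : ∀ x, resolventKernel t ρ l (w x) =
      cexp (t * cexp (w x)) * (1 - l * cexp (-(ρ * w x)))⁻¹ := fun x ↦ by
    rw [resolventKernel, Complex.exp_neg, ← div_eq_mul_inv l, one_sub_div (Complex.exp_ne_zero _),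
      inv_div]
  simp_rw [← integral_const_mul, hterm, hsum]
  refine hasSum_integral_mul_pow (q := ‖l‖ / Real.exp (ρ * X)) hint
    ((Complex.continuous_exp.comp_aestronglyMeasurable (hw.const_mul _).neg).const_mul l)
    (by positivity) ((div_lt_one (Real.exp_pos _)).2 hl) ?_
  filter_upwards [hX] with x hx
  rw [norm_mul, Complex.norm_exp, Complex.neg_re, Complex.re_ofReal_mul, Real.exp_neg,
    div_eq_mul_inv]
  gcongr

lemma hasSum_hankelIntegral_hankelKernel (ht : 0 < t) (hρ : 0 ≤ ρ) (hX : 0 ≤ X)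
    (hl : ‖l‖ < Real.exp (ρ * X)) (hcos : Real.cos θ < 0) :
    HasSum (fun n : ℕ ↦ l ^ n * hankelIntegral θ X (hankelKernel t (-(ρ * n))))
      (hankelIntegral θ X (resolventKernel t ρ l)) := by
  have hray : ∀ φ : ℝ, Real.cos φ < 0 →
      HasSum (fun n : ℕ ↦ l ^ n * ∫ x in Ioi X, hankelKernel t (-(ρ * n)) (x + φ * I))
        (∫ x in Ioi X, resolventKernel t ρ l (x + φ * I)) := by
    intro φ hφ
    refine hasSum_integral_hankelKernel hρ hl (by fun_prop) ?_ ?_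
    · filter_upwards [ae_restrict_mem measurableSet_Ioi] with x hx
      simpa using (mem_Ioi.1 hx).le
    · simpa using integrable_mul_cexp (by fun_prop) (by fun_prop)
        (fun b hb ↦ integrableOn_exp_mul_norm_mul_norm_cexp ht hX hφ hb) 0
  have hsegment : HasSum
      (fun n : ℕ ↦ l ^ n * ∫ y in (-θ)..θ, hankelKernel t (-(ρ * n)) (X + y * I))
      (∫ y in (-θ)..θ, resolventKernel t ρ l (X + y * I)) := by
    have hIoc : ∀ a b : ℝ, HasSum
        (fun n : ℕ ↦ l ^ n * ∫ y in Ioc a b, hankelKernel t (-(ρ * n)) (X + y * I))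
        (∫ y in Ioc a b, resolventKernel t ρ l (X + y * I)) := fun a b ↦
      hasSum_integral_hankelKernel hρ hl (by fun_prop) (.of_forall fun y ↦ by simp)
        ((Continuous.integrableOn_Icc (by fun_prop)).mono_set Ioc_subset_Icc_self)
    simp_rw [intervalIntegral, mul_sub]
    exact (hIoc _ _).sub (hIoc _ _)
  unfold hankelIntegral
  refine (((hray θ hcos).sub (hray (-θ) (by rwa [Real.cos_neg]))).add
    (hsegment.mul_left I)).congr_fun fun n ↦ ?_
  ring

lemma isHankelDominated_resolventKernel (hρ : 0 < ρ) (hρ₁ : ρ ≤ 1) (hl : θ < |l.arg|) :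
    IsHankelDominated θ t (resolventKernel t ρ l) where
  differentiableAt := fun w hw ↦ by
    have := cexp_sub_ne_zero hρ.le hρ₁ hl hw
    unfold resolventKernel
    fun_prop (disch := assumption)
  exists_norm_le := by
    refine ⟨ρ, hρ, (angleGap θ l * ‖l‖)⁻¹, fun w hw ↦ ?_⟩
    have hl0 : 0 < ‖l‖ := norm_pos_iff.2 (by rintro rfl; simp at hl; linarith [abs_nonneg w.im])
    have hgap := angleGap_pos ((abs_nonneg _).trans hw) hl
    have hle : angleGap θ l * ‖l‖ ≤ ‖cexp (ρ * w) - l‖ :=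
      le_trans (by gcongr; simp) (angleGap_mul_norm_cexp_add_norm_le hρ.le hρ₁ hl hw)
    rw [resolventKernel, hankelKernel, norm_mul, norm_mul, norm_div, ← mul_div_assoc,
      inv_mul_eq_div]
    gcongr

lemma two_pi_I_mul_mittagLeffler (ht : 0 < t) (hρ : 0 < ρ) (hρ₁ : ρ ≤ 1) (hθ : π / 2 < θ)
    (hl : θ < |l.arg|) : 2 * π * I * mittagLeffler ρ (l * (t ^ ρ : ℝ)) =
      raysIntegral θ (resolventKernel t ρ l) := by
  have hθπ : θ < π := hl.trans_le l.abs_arg_le_pi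
  have hcos : Real.cos θ < 0 := Real.cos_neg_of_pi_div_two_lt_of_lt hθ (by linarith)
  obtain ⟨X, hX, hlX⟩ : ∃ X : ℝ, 0 ≤ X ∧ ‖l‖ < Real.exp (ρ * X) := by
    refine ⟨‖l‖ / ρ, by positivity, ?_⟩
    rw [mul_div_cancel₀ _ hρ.ne']
    linarith [Real.add_one_le_exp ‖l‖]
  have hdom : IsHankelDominated θ t (resolventKernel t ρ l) :=
    isHankelDominated_resolventKernel hρ hρ₁ hl
  rw [← hdom.hankelIntegral_eq_raysIntegral ht hθ hθπ X,
    ← (hasSum_hankelIntegral_hankelKernel ht hρ.le hX hlX hcos).tsum_eq, mittagLeffler,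
    ← tsum_mul_left]
  refine tsum_congr fun n ↦ ?_
  have hpow : (t : ℂ) ^ (ρ * n : ℂ) = ((t ^ ρ : ℝ) : ℂ) ^ n := by
    rw [Complex.cpow_mul_nat, Complex.ofReal_cpow ht.le]
  rw [hankelIntegral_hankelKernel ht hX hθ hθπ, neg_neg, sub_neg_eq_add, add_comm (1 : ℂ), hpow]
  ring

end Resolvent

section Remainder

/-- What is left of `resolventKernel` after splitting off `-l⁻¹ * hankelKernel`, according to
`u / (u - l) = -u / l + u ^ 2 / (l * (u - l))` for `u = s^ρ`. -/
noncomputable def remainderKernel (t ρ : ℝ) (l w : ℂ) : ℂ :=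
  cexp (t * cexp w) * (cexp (ρ * w) ^ 2 / (l * (cexp (ρ * w) - l)))

/-- The derivative of `remainderKernel` with respect to `ρ`. -/
noncomputable def remainderDerivKernel (t ρ : ℝ) (l w : ℂ) : ℂ :=
  cexp (t * cexp w) *
    (w * cexp (ρ * w) ^ 2 * (cexp (ρ * w) - 2 * l) / (l * (cexp (ρ * w) - l) ^ 2))

variable {t θ φ ρ : ℝ} {l w : ℂ}

lemma resolventKernel_eq_add_remainderKernel (hl : l ≠ 0) (hw : cexp (ρ * w) - l ≠ 0) :
    resolventKernel t ρ l w = -l⁻¹ * hankelKernel t ρ w + remainderKernel t ρ l w := by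
  rw [resolventKernel, hankelKernel, remainderKernel]
  field_simp
  ring

lemma hasDerivAt_remainderKernel (hw : cexp (ρ * w) - l ≠ 0) :
    HasDerivAt (fun ρ : ℝ ↦ remainderKernel t ρ l w) (remainderDerivKernel t ρ l w) ρ := by
  rcases eq_or_ne l 0 with rfl | hl
  · simpa [remainderKernel, remainderDerivKernel] using hasDerivAt_const ρ (0 : ℂ)
  have hexp : HasDerivAt (fun ρ : ℝ ↦ cexp (ρ * w)) (cexp (ρ * w) * w) ρ := by
    simpa using (Complex.ofRealCLM.hasDerivAt.mul_const w).cexp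
  refine (((hexp.pow 2).div ((hexp.sub_const l).const_mul l)
    (mul_ne_zero hl hw)).const_mul (cexp (t * cexp w))).congr_deriv ?_
  rw [remainderDerivKernel]
  simp only [Pi.pow_apply]
  field_simp
  ring

lemma measurable_remainderKernel : Measurable (remainderKernel t ρ l) := by
  unfold remainderKernel
  fun_prop

lemma measurable_remainderDerivKernel : Measurable (remainderDerivKernel t ρ l) := by
  unfold remainderDerivKernel
  fun_prop

lemma norm_hankelKernel_two_mul (t ρ : ℝ) (w : ℂ) :
    ‖hankelKernel t (2 * ρ : ℝ) w‖ = ‖cexp (t * cexp w)‖ * ‖cexp (ρ * w)‖ ^ 2 := by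
  rw [hankelKernel, norm_mul, ← norm_pow, ← Complex.exp_nat_mul]
  push_cast
  ring_nf

lemma norm_remainderKernel_le (hρ : 0 ≤ ρ) (hρ₁ : ρ ≤ 1) (hl : θ < |l.arg|) (hw : |w.im| ≤ θ) :
    ‖remainderKernel t ρ l w‖ ≤
      (angleGap θ l * ‖l‖ ^ 2)⁻¹ * ‖hankelKernel t (2 * ρ : ℝ) w‖ := by
  have hgap := angleGap_pos ((abs_nonneg _).trans hw) hl
  rcases eq_or_ne l 0 with rfl | hl0
  · simp [remainderKernel]
  have hle : angleGap θ l * ‖l‖ ≤ ‖cexp (ρ * w) - l‖ :=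
    le_trans (by gcongr; simp) (angleGap_mul_norm_cexp_add_norm_le hρ hρ₁ hl hw)
  rw [remainderKernel, norm_hankelKernel_two_mul, norm_mul, norm_div, norm_mul, norm_pow,
    ← mul_div_assoc, inv_mul_eq_div]
  refine div_le_div_of_nonneg_left (by positivity) (by positivity) ?_
  linarith [mul_le_mul_of_nonneg_left hle (norm_nonneg l)]

lemma norm_remainderDerivKernel_le (hρ : 0 ≤ ρ) (hρ₁ : ρ ≤ 1) (hl : θ < |l.arg|)
    (hw : |w.im| ≤ θ) : ‖remainderDerivKernel t ρ l w‖ ≤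
      2 / (angleGap θ l * ‖l‖) ^ 2 * (‖w‖ * ‖hankelKernel t (2 * ρ : ℝ) w‖) := by
  set u := cexp (ρ * w) with hu
  have hgap := angleGap_pos ((abs_nonneg _).trans hw) hl
  rcases eq_or_ne l 0 with rfl | hl0
  · simp [remainderDerivKernel]
  have hle := angleGap_mul_norm_cexp_add_norm_le hρ hρ₁ hl hw
  have hsub := norm_pos_iff.2 (cexp_sub_ne_zero hρ hρ₁ hl hw)
  rw [← hu] at hle hsub
  have hfactor : ‖u - 2 * l‖ / (‖l‖ * ‖u - l‖ ^ 2) ≤ 2 / (angleGap θ l * ‖l‖) ^ 2 := by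
    have hnum : ‖u - 2 * l‖ ≤ 2 * (‖u‖ + ‖l‖) := by
      refine (norm_sub_le _ _).trans ?_
      rw [norm_mul, Complex.norm_ofNat]
      linarith [norm_nonneg u]
    have hnum' : angleGap θ l * ‖u - 2 * l‖ ≤ 2 * ‖u - l‖ := by
      linarith [mul_le_mul_of_nonneg_left hnum hgap.le]
    have hden : angleGap θ l * ‖l‖ ≤ ‖u - l‖ := le_trans (by gcongr; simp) hle
    rw [div_le_div_iff₀ (by positivity) (by positivity)]
    calc ‖u - 2 * l‖ * (angleGap θ l * ‖l‖) ^ 2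
        = angleGap θ l * ‖u - 2 * l‖ * ‖l‖ * (angleGap θ l * ‖l‖) := by ring
      _ ≤ 2 * ‖u - l‖ * ‖l‖ * ‖u - l‖ := by gcongr
      _ = 2 * (‖l‖ * ‖u - l‖ ^ 2) := by ring
  calc ‖remainderDerivKernel t ρ l w‖
      = ‖u - 2 * l‖ / (‖l‖ * ‖u - l‖ ^ 2) * (‖w‖ * ‖hankelKernel t (2 * ρ : ℝ) w‖) := by
        rw [norm_hankelKernel_two_mul, remainderDerivKernel, ← hu]
        simp only [norm_mul, norm_div, norm_pow]
        ring
    _ ≤ 2 / (angleGap θ l * ‖l‖) ^ 2 * (‖w‖ * ‖hankelKernel t (2 * ρ : ℝ) w‖) := by gcongr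

lemma norm_remainderDerivKernel_ray_le (hρ : 0 ≤ ρ) (hρ₁ : ρ ≤ 1) (hl : θ < |l.arg|)
    (hφ : |φ| ≤ θ) (x : ℝ) : ‖remainderDerivKernel t ρ l (x + φ * I)‖ ≤
      2 / (angleGap θ l * ‖l‖) ^ 2 *
        ((|x| + π) * logGammaWeight (2 * ρ) (t * -Real.cos φ) x) := by
  have hnorm : ‖(x + φ * I : ℂ)‖ ≤ |x| + π := by
    refine (norm_add_le _ _).trans ?_
    simpa using hφ.trans (hl.le.trans l.abs_arg_le_pi)
  have hkernel : ‖hankelKernel t (2 * ρ : ℝ) (x + φ * I)‖ =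
      logGammaWeight (2 * ρ) (t * -Real.cos φ) x := by
    rw [norm_hankelKernel]
    simp
  refine (norm_remainderDerivKernel_le hρ hρ₁ hl (by simpa using hφ)).trans ?_
  rw [hkernel]
  gcongr
  exact logGammaWeight_pos.le

lemma isHankelDominated_remainderKernel (hρ : 0 < ρ) (hρ₁ : ρ ≤ 1) (hl : θ < |l.arg|) :
    IsHankelDominated θ t (remainderKernel t ρ l) where
  differentiableAt := fun w hw ↦ by
    have hne := cexp_sub_ne_zero hρ.le hρ₁ hl hw
    have hl0 : l ≠ 0 := by rintro rfl; simp at hl; linarith [abs_nonneg w.im]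
    unfold remainderKernel
    fun_prop (disch := simp_all)
  exists_norm_le := ⟨2 * ρ, by positivity, (angleGap θ l * ‖l‖ ^ 2)⁻¹, fun _ hw ↦
    norm_remainderKernel_le hρ.le hρ₁ hl hw⟩

lemma mittagLeffler_eq_neg_inv_mul_add (ht : 0 < t) (hρ : 0 < ρ) (hρ₁ : ρ ≤ 1) (hθ : π / 2 < θ)
    (hl : θ < |l.arg|) : mittagLeffler ρ (l * (t ^ ρ : ℝ)) =
      -l⁻¹ * ((t ^ (-ρ) / Real.Gamma (1 - ρ) : ℝ) : ℂ) +
        (2 * π * I)⁻¹ * raysIntegral θ (remainderKernel t ρ l) := by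
  have hθ0 : 0 ≤ θ := by linarith [Real.pi_pos]
  have hl0 : l ≠ 0 := by rintro rfl; simp at hl; linarith
  have hθπ : θ < π := hl.trans_le l.abs_arg_le_pi
  have hcos : Real.cos θ < 0 := Real.cos_neg_of_pi_div_two_lt_of_lt hθ (by linarith)
  have hray : ∀ φ : ℝ, |φ| ≤ θ → Real.cos φ < 0 → ∫ x : ℝ, resolventKernel t ρ l (x + φ * I) =
      -l⁻¹ * (∫ x : ℝ, hankelKernel t ρ (x + φ * I)) +
        ∫ x : ℝ, remainderKernel t ρ l (x + φ * I) := by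
    intro φ hφ hφcos
    rw [← integral_const_mul, ← integral_add
      (((isHankelDominated_hankelKernel (by simpa)).integrable_ray ht hφ hφcos).const_mul _)
      ((isHankelDominated_remainderKernel hρ hρ₁ hl).integrable_ray ht hφ hφcos)]
    exact integral_congr_ae (.of_forall fun x ↦
      resolventKernel_eq_add_remainderKernel hl0 (cexp_sub_ne_zero hρ.le hρ₁ hl (by simpa)))
  have hmain := raysIntegral_hankelKernel_of_re_pos (c := ρ) ht hθ hθπ (by simpa)
  have hcast : ((t ^ (-ρ) / Real.Gamma (1 - ρ) : ℝ) : ℂ) =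
      (t : ℂ) ^ (-ρ : ℂ) * (Complex.Gamma (1 - ρ))⁻¹ := by
    rw [Complex.ofReal_div, Complex.ofReal_cpow ht.le, ← Complex.Gamma_ofReal, div_eq_mul_inv]
    push_cast
    rfl
  have hrep := two_pi_I_mul_mittagLeffler ht hρ hρ₁ hθ hl
  rw [raysIntegral, hray θ (abs_of_nonneg hθ0).le hcos,
    hray (-θ) (by rw [abs_neg, abs_of_nonneg hθ0]) (by rwa [Real.cos_neg])] at hrep
  rw [← mul_right_inj' Complex.two_pi_I_ne_zero, hrep, hcast, mul_add,
    mul_inv_cancel_left₀ Complex.two_pi_I_ne_zero, raysIntegral]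
  rw [raysIntegral] at hmain
  linear_combination -l⁻¹ * hmain

lemma hasDerivAt_integral_remainderKernel (ht : 0 < t) (hρ : ρ ∈ Ioo 0 1) (hl : θ < |l.arg|)
    (hφ : |φ| ≤ θ) (hcos : Real.cos φ < 0) :
    HasDerivAt (fun ρ : ℝ ↦ ∫ x : ℝ, remainderKernel t ρ l (x + φ * I))
      (∫ x : ℝ, remainderDerivKernel t ρ l (x + φ * I)) ρ := by
  obtain ⟨hρ₀, hρ₁⟩ := hρ
  have him : ∀ x : ℝ, |(x + φ * I : ℂ).im| ≤ θ := fun x ↦ by simpa using hφ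
  have hδ : 0 < t * -Real.cos φ := mul_pos ht (neg_pos.2 hcos)
  refine (hasDerivAt_integral_of_dominated_loc_of_deriv_le (μ := volume)
    (F := fun r x ↦ remainderKernel t r l (x + φ * I))
    (F' := fun r x ↦ remainderDerivKernel t r l (x + φ * I))
    (Ioo_mem_nhds (half_lt_self hρ₀) hρ₁)
    (bound := fun x ↦ 2 / (angleGap θ l * ‖l‖) ^ 2 *
      ((|x| + π) * logGammaWeight ρ (t * -Real.cos φ) x +
        (|x| + π) * logGammaWeight 2 (t * -Real.cos φ) x))
    (.of_forall fun ρ ↦ (measurable_remainderKernel.comp (by fun_prop)).aestronglyMeasurable)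
    ((isHankelDominated_remainderKernel hρ₀ hρ₁.le hl).integrable_ray ht hφ hcos)
    (measurable_remainderDerivKernel.comp (by fun_prop)).aestronglyMeasurable
    (.of_forall fun x r hr ↦ ?_) ?_ (.of_forall fun x r hr ↦ ?_)).2
  · refine (norm_remainderDerivKernel_ray_le (by linarith [hr.1]) hr.2.le hl hφ x).trans ?_
    rw [← mul_add]
    gcongr
    exact logGammaWeight_le_add (by linarith [hr.1]) (by linarith [hr.2])
  · exact ((integrable_abs_add_mul_logGammaWeight π hρ₀ hδ).add
      (integrable_abs_add_mul_logGammaWeight π two_pos hδ)).const_mul _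
  · exact hasDerivAt_remainderKernel
      (cexp_sub_ne_zero (by linarith [hr.1]) hr.2.le hl (him x))

lemma hasDerivAt_raysIntegral_remainderKernel (ht : 0 < t) (hρ : ρ ∈ Ioo 0 1) (hθ : π / 2 < θ)
    (hl : θ < |l.arg|) : HasDerivAt (fun ρ : ℝ ↦ raysIntegral θ (remainderKernel t ρ l))
      (raysIntegral θ (remainderDerivKernel t ρ l)) ρ := by
  have hθ0 : |θ| = θ := abs_of_pos (by linarith [Real.pi_pos])
  have hcos : Real.cos θ < 0 := Real.cos_neg_of_pi_div_two_lt_of_lt hθ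
    (by linarith [l.abs_arg_le_pi, Real.pi_pos])
  exact (hasDerivAt_integral_remainderKernel ht hρ hl hθ0.le hcos).sub
    (hasDerivAt_integral_remainderKernel ht hρ hl (by rw [abs_neg, hθ0]) (by rwa [Real.cos_neg]))

lemma exists_norm_raysIntegral_remainderDerivKernel_le {β : ℝ} (hβ : 0 < β) (hθ : π / 2 < θ)
    (hl : θ < |l.arg|) : ∃ M, 0 < M ∧ ∀ t, 1 ≤ t → ∀ ρ ∈ Icc β 1,
      ‖raysIntegral θ (remainderDerivKernel t ρ l)‖ ≤
        M * (1 + Real.log t) / (‖l‖ * t ^ ρ) ^ 2 := by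
  have hθ0 : |θ| = θ := abs_of_pos (by linarith [Real.pi_pos])
  have hcos : Real.cos θ < 0 := Real.cos_neg_of_pi_div_two_lt_of_lt hθ
    (by linarith [l.abs_arg_le_pi, Real.pi_pos])
  have hgap := angleGap_pos (by linarith [Real.pi_pos]) hl
  obtain ⟨M, hM, hint⟩ := exists_integral_abs_add_mul_logGammaWeight_le 2
    (show 1 ≤ π by linarith [Real.pi_gt_three]) (show 0 < 2 * β by linarith) (neg_pos.2 hcos)
  refine ⟨2 * (2 / angleGap θ l ^ 2 * M), by positivity, fun t ht ρ ⟨hβρ, hρ₁⟩ ↦ ?_⟩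
  have ht0 : 0 < t := by linarith
  have hρ : 0 < ρ := by linarith
  have hray : ∀ φ : ℝ, |φ| ≤ θ → Real.cos φ = Real.cos θ →
      ‖∫ x : ℝ, remainderDerivKernel t ρ l (x + φ * I)‖ ≤
        2 / (angleGap θ l * ‖l‖) ^ 2 * (M * (1 + Real.log t) * t ^ (-(2 * ρ))) := by
    intro φ hφ hφcos
    refine (norm_integral_le_of_norm_le
      ((integrable_abs_add_mul_logGammaWeight π (by positivity)
        (mul_pos ht0 (neg_pos.2 (hφcos.trans_lt hcos)))).const_mul _)
      (.of_forall (norm_remainderDerivKernel_ray_le hρ.le hρ₁ hl hφ))).trans ?_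
    rw [integral_const_mul, hφcos]
    gcongr
    exact hint t ht (2 * ρ) ⟨by linarith, by linarith⟩
  have hpow : t ^ (-(2 * ρ)) = ((t ^ ρ) ^ 2)⁻¹ := by
    rw [Real.rpow_neg ht0.le, mul_comm, Real.rpow_mul ht0.le, Real.rpow_two]
  calc _ ≤ _ := norm_sub_le_of_le (hray θ hθ0.le rfl)
        (hray (-θ) (by rw [abs_neg, hθ0]) (Real.cos_neg θ))
    _ = _ := by rw [hpow]; field_simp; ring

end Remainder

section Derivative

variable {t θ ρ m : ℝ} {l : ℂ}

lemma hasDerivAt_mittagLeffler_mul_rpow (ht : 0 < t) (hρ : ρ ∈ Ioo 0 1) (hθ : π / 2 < θ)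
    (hl : θ < |l.arg|) : HasDerivAt (fun ρ : ℝ ↦ mittagLeffler ρ (l * (t ^ ρ : ℝ)))
      (-l⁻¹ * (deriv (fun ρ ↦ t ^ (-ρ) / Real.Gamma (1 - ρ)) ρ : ℝ) +
        (2 * π * I)⁻¹ * raysIntegral θ (remainderDerivKernel t ρ l)) ρ := by
  have hmain : HasDerivAt (fun ρ ↦ t ^ (-ρ) / Real.Gamma (1 - ρ))
      (deriv (fun ρ ↦ t ^ (-ρ) / Real.Gamma (1 - ρ)) ρ) ρ :=
    (hasDerivAt_rpow_neg_div_Gamma_one_sub ht (by linarith [hρ.2])).differentiableAt.hasDerivAt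
  refine ((hmain.ofReal_comp.const_mul (-l⁻¹)).add
    ((hasDerivAt_raysIntegral_remainderKernel ht hρ hθ hl).const_mul _)).congr_of_eventuallyEq ?_
  filter_upwards [Ioo_mem_nhds hρ.1 hρ.2] with r hr
  exact mittagLeffler_eq_neg_inv_mul_add ht hr.1 hr.2.le hθ hl

lemma re_neg_inv_mul_ofReal_lt (hl : l.re < 0) (hm : m < -t ^ (-ρ)) (ht : 0 ≤ t) :
    (-l⁻¹ * (m : ℂ)).re < -(-l.re) / (‖l‖ ^ 2 * t ^ ρ) := by
  have hl0 : 0 < ‖l‖ := norm_pos_iff.2 (by rintro rfl; simp at hl)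
  have hcoeff : 0 < -l.re / ‖l‖ ^ 2 := div_pos (neg_pos.2 hl) (by positivity)
  calc (-l⁻¹ * (m : ℂ)).re = -l.re / ‖l‖ ^ 2 * m := by
        rw [Complex.re_mul_ofReal, Complex.neg_re, Complex.inv_re, Complex.normSq_eq_norm_sq,
          neg_div]
    _ < -l.re / ‖l‖ ^ 2 * -t ^ (-ρ) := by gcongr
    _ = -(-l.re) / (‖l‖ ^ 2 * t ^ ρ) := by rw [Real.rpow_neg ht, ← div_div]; ring

lemma re_inv_two_pi_I_mul_le_norm (z : ℂ) : ((2 * π * I)⁻¹ * z).re ≤ ‖z‖ := by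
  refine (Complex.re_le_norm _).trans ?_
  rw [norm_mul, norm_inv]
  refine mul_le_of_le_one_left (norm_nonneg z) (inv_le_one_of_one_le₀ ?_)
  simpa [abs_of_pos Real.pi_pos] using (by linarith [Real.pi_gt_three] : 1 ≤ 2 * π)

end Derivative

end MittagLeffler

open MittagLeffler in
/-- **Key derivative estimate (der), Caputo case.** For `0 < β₀ < 1` and `Re λ < 0`
there is `C > 0` such that for every `t₀ > e^{1−γ}` and `ρ ∈ [β₀, 1)` the map
`ρ ↦ E_ρ(λ t₀^ρ)` is differentiable at `ρ` and
`Re (d/dρ E_ρ(λ t₀^ρ)) < −λ₁/(|λ|² t₀^ρ) + C (1/ρ + ln t₀)/(|λ| t₀^ρ)²`,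
where `λ₁ = −Re λ`. -/
theorem caputo_derivative_estimate (β₀ : ℝ) (hβ₀ : 0 < β₀) (hβ₀1 : β₀ < 1)
    (l : ℂ) (hl : l.re < 0) :
    ∃ C : ℝ, 0 < C ∧ ∀ t₀ : ℝ, Real.exp (1 - Real.eulerMascheroniConstant) < t₀ →
      ∀ ρ ∈ Set.Ico β₀ 1,
        DifferentiableAt ℝ (fun ρ : ℝ => mittagLeffler ρ (l * ((t₀ ^ ρ : ℝ) : ℂ))) ρ ∧
        (deriv (fun ρ : ℝ => mittagLeffler ρ (l * ((t₀ ^ ρ : ℝ) : ℂ))) ρ).re <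
          -(-l.re) / (‖l‖ ^ 2 * t₀ ^ ρ) +
            C * (1 / ρ + Real.log t₀) / (‖l‖ * t₀ ^ ρ) ^ 2 := by
  have harg : π / 2 < |l.arg| := by
    rw [← not_le, Complex.abs_arg_le_pi_div_two_iff]
    exact hl.not_ge
  obtain ⟨θ, hθ, hθl⟩ := exists_between harg
  obtain ⟨C, hC, hrem⟩ := exists_norm_raysIntegral_remainderDerivKernel_le hβ₀ hθ hθl
  refine ⟨C, hC, fun t ht ρ ⟨hβρ, hρ₁⟩ ↦ ?_⟩
  have hρ : 0 < ρ := hβ₀.trans_le hβρ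
  have ht₁ : 1 ≤ t := ht.le.trans' (Real.one_le_exp
    (by linarith [Real.eulerMascheroniConstant_lt_two_thirds]))
  have hder := hasDerivAt_mittagLeffler_mul_rpow (by linarith : 0 < t) ⟨hρ, hρ₁⟩ hθ hθl
  refine ⟨hder.differentiableAt, ?_⟩
  rw [hder.deriv, Complex.add_re]
  refine add_lt_add_of_lt_of_le
    (re_neg_inv_mul_ofReal_lt hl (deriv_rpow_neg_div_Gamma_one_sub_lt ht ⟨hρ.le, hρ₁⟩)
      (by linarith))
    ((re_inv_two_pi_I_mul_le_norm _).trans ((hrem t ht₁ ρ ⟨hβρ, hρ₁.le⟩).trans ?_))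
  gcongr
  exact one_le_one_div hρ hρ₁.le
end

section
/- Let 0 < β₀ < 1, let λ ∈ ℂ with Re λ < 0 and |Re λ| ≠ |Im λ|, write λ₁ = −Re λ > 0 and λ₂ = Im λ, and let γ denote the Euler–Mascheroni constant. Then there exists a constant C > 0 (depending only on λ and β₀) such that for every t₀ ≥ e^{1−γ}·e^{2/β₀} and every ρ ∈ [β₀, 1), the function ρ ↦ t₀^{ρ−1}·E_{ρ,ρ}(λ·t₀^ρ) is differentiable at ρ and sign(λ₁² − λ₂²) · Re(d/dρ [t₀^{ρ−1}·E_{ρ,ρ}(λ·t₀^ρ)]) ≤ −|λ₁² − λ₂²|/(|λ|⁴·t₀^{ρ+1}) + C·(1/ρ + ln t₀)/(|λ|³·t₀^{2ρ+1}). -/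
/-- The two-parameter Mittag-Leffler function with equal parameters,
`E_{β,β}(z) = ∑ₖ zᵏ / Γ(βk + β)`. -/
noncomputable def mittagLeffler2 (β : ℝ) (z : ℂ) : ℂ :=
  ∑' k : ℕ, z ^ k / Complex.Gamma (β * k + β)

/-!
The substitution `s = exp w` turns Hankel's contour for `1 / Γ` into the boundary of a horizontal
strip that does not depend on `ρ`, and the geometric series of the resolvent exhibits
`2πi t^(ρ-1) E_{ρ,ρ}(l t^ρ)` as the integral of `exp (t s) / (s ^ ρ - l) ds` over it: `l` lies at a
positive distance from the sector swept by `s ^ ρ`, uniformly in `ρ ∈ (0, 1]`. In the expansion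
`(s ^ ρ - l)⁻¹ = -l⁻¹ - s ^ ρ / l ^ 2 - ⋯` the constant contributes nothing, the linear term gives
`ρ t^(-1-ρ) / (Γ(1 - ρ) l ^ 2)`, and the `ρ`-derivative of the rest is `O(t^(-1-2ρ) (1 + log t))`
by dominated differentiation. The digamma bound `ψ x ≤ 1 - γ - 1 / x` on `(0, 1]` makes the
`ρ`-derivative of `ρ t^(-1-ρ) / Γ(1 - ρ)` at most `-t^(-1-ρ)` as soon as
`log t ≥ 1 - γ + 2 / ρ`.
-/

open MeasureTheory Set Filter Topology Complex
open scoped Real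

section GammaFunction

open Real (eulerMascheroniConstant)

lemma differentiableAt_realGamma_of_pos {x : ℝ} (hx : 0 < x) : DifferentiableAt ℝ Real.Gamma x :=
  Real.differentiableAt_Gamma fun m => (neg_nonpos.2 m.cast_nonneg |>.trans_lt hx).ne'

lemma logDeriv_realGamma_add_one {x : ℝ} (hx : 0 < x) :
    logDeriv Real.Gamma (x + 1) = logDeriv Real.Gamma x + x⁻¹ := by
  have hΓ := (Real.Gamma_pos_of_pos hx).ne'
  have hshift : HasDerivAt (fun y : ℝ => Real.Gamma (y + 1)) (deriv Real.Gamma (x + 1)) x :=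
    (differentiableAt_realGamma_of_pos (by linarith)).hasDerivAt.comp_add_const x 1
  have hprod : HasDerivAt (fun y : ℝ => Real.Gamma (y + 1))
      (1 * Real.Gamma x + x * deriv Real.Gamma x) x :=
    ((hasDerivAt_id x).mul (differentiableAt_realGamma_of_pos hx).hasDerivAt).congr_of_eventuallyEq
      ((eventually_ne_nhds hx.ne').mono fun y hy => Real.Gamma_add_one hy)
  rw [logDeriv_apply, logDeriv_apply, hshift.unique hprod, Real.Gamma_add_one hx.ne']
  field_simp
  ring

lemma monotoneOn_logDeriv_realGamma : MonotoneOn (logDeriv Real.Gamma) (Ioi 0) := by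
  have hderiv {y : ℝ} (hy : 0 < y) :
      HasDerivAt (Real.log ∘ Real.Gamma) (logDeriv Real.Gamma y) y :=
    (differentiableAt_realGamma_of_pos hy).hasDerivAt.log (Real.Gamma_pos_of_pos hy).ne'
  exact (Real.convexOn_log_Gamma.monotoneOn_deriv fun y hy => (hderiv hy).differentiableAt).congr
    fun y hy => (hderiv hy).deriv

lemma logDeriv_realGamma_two : logDeriv Real.Gamma 2 = 1 - eulerMascheroniConstant := by
  have h := Real.deriv_Gamma_nat 1
  simp only [Nat.cast_one, one_add_one_eq_two, Nat.factorial_one, harmonic_succ, harmonic_zero,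
    zero_add, inv_one, Rat.cast_one, one_mul] at h
  rw [logDeriv_apply, h, Real.Gamma_two]
  ring

lemma logDeriv_realGamma_le {x : ℝ} (hx : 0 < x) (hx1 : x ≤ 1) :
    logDeriv Real.Gamma x ≤ 1 - eulerMascheroniConstant - x⁻¹ := by
  have h : logDeriv Real.Gamma (x + 1) ≤ logDeriv Real.Gamma 2 :=
    monotoneOn_logDeriv_realGamma (mem_Ioi.2 (by linarith)) (mem_Ioi.2 two_pos) (by linarith)
  rw [logDeriv_realGamma_add_one hx, logDeriv_realGamma_two] at h
  linarith

lemma realGamma_le_inv {x : ℝ} (hx : 0 < x) (hx1 : x ≤ 1) : Real.Gamma x ≤ x⁻¹ := by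
  have h := Real.convexOn_Gamma.2 (mem_Ioi.2 one_pos) (mem_Ioi.2 two_pos)
    (sub_nonneg.2 hx1) hx.le (by ring)
  simp only [smul_eq_mul, Real.Gamma_one, Real.Gamma_two] at h
  rw [show (1 - x) * 1 + x * 2 = x + 1 by ring, Real.Gamma_add_one hx.ne'] at h
  rw [← one_div, le_div_iff₀' hx]
  linarith

end GammaFunction

section LeadingTerm

/-- The leading term of `l ^ 2 * t ^ (ρ - 1) * E_{ρ,ρ}(l * t ^ ρ)` as `t → ∞`, that is,
`-t ^ (-(1 + ρ)) / Γ(-ρ)`, written so that the division is harmless for `0 ≤ ρ < 1`. -/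
noncomputable def leadingTerm (t ρ : ℝ) : ℝ :=
  t ^ (-(1 + ρ)) * (ρ / Real.Gamma (1 - ρ))

lemma hasDerivAt_leadingTerm {t ρ : ℝ} (ht : 0 < t) (hρ : ρ < 1) :
    HasDerivAt (leadingTerm t)
      (-(t ^ (-(1 + ρ)) *
        ((ρ * Real.log t - 1 - ρ * logDeriv Real.Gamma (1 - ρ)) / Real.Gamma (1 - ρ)))) ρ := by
  have hρ' : 0 < 1 - ρ := sub_pos.2 hρ
  have hΓ := (Real.Gamma_pos_of_pos hρ').ne'
  have hpow : HasDerivAt (fun r : ℝ => t ^ (-(1 + r))) (Real.log t * -1 * t ^ (-(1 + ρ))) ρ :=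
    ((hasDerivAt_id ρ).const_add 1).neg.const_rpow ht
  have hGamma : HasDerivAt (fun r : ℝ => Real.Gamma (1 - r)) (-deriv Real.Gamma (1 - ρ)) ρ :=
    (differentiableAt_realGamma_of_pos hρ').hasDerivAt.comp_const_sub 1 ρ
  refine (hpow.mul ((hasDerivAt_id ρ).div hGamma hΓ)).congr_deriv ?_
  simp only [Pi.div_apply, id, logDeriv_apply]
  field_simp
  ring

lemma deriv_leadingTerm_le {t ρ : ℝ} (ht : 0 < t) (hρ0 : 0 < ρ) (hρ1 : ρ < 1)
    (hlog : 1 - Real.eulerMascheroniConstant + 2 / ρ ≤ Real.log t) :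
    deriv (leadingTerm t) ρ ≤ -t ^ (-(1 + ρ)) := by
  have hρ' : 0 < 1 - ρ := sub_pos.2 hρ1
  have hlogDeriv : ρ * logDeriv Real.Gamma (1 - ρ) ≤
      ρ * (1 - Real.eulerMascheroniConstant) - ρ * (1 - ρ)⁻¹ := by
    rw [← mul_sub]
    exact mul_le_mul_of_nonneg_left (logDeriv_realGamma_le hρ' (by linarith)) hρ0.le
  have hlog' : ρ * (1 - Real.eulerMascheroniConstant) + 2 ≤ ρ * Real.log t := by
    calc ρ * (1 - Real.eulerMascheroniConstant) + 2
        = ρ * (1 - Real.eulerMascheroniConstant + 2 / ρ) := by field_simp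
      _ ≤ ρ * Real.log t := mul_le_mul_of_nonneg_left hlog hρ0.le
  have hinv : ρ * (1 - ρ)⁻¹ = (1 - ρ)⁻¹ - 1 := by field_simp; ring
  have hnum : Real.Gamma (1 - ρ) ≤ ρ * Real.log t - 1 - ρ * logDeriv Real.Gamma (1 - ρ) :=
    (realGamma_le_inv hρ' (by linarith)).trans (by linarith)
  rw [(hasDerivAt_leadingTerm ht hρ1).deriv, neg_le_neg_iff]
  exact le_mul_of_one_le_right (Real.rpow_nonneg ht.le _)
    ((one_le_div (Real.Gamma_pos_of_pos hρ')).2 hnum)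

end LeadingTerm

section GammaWeight

lemma integral_exp_smul_comp_exp {E : Type*} [NormedAddCommGroup E] [NormedSpace ℝ E]
    (g : ℝ → E) : ∫ x, Real.exp x • g (Real.exp x) = ∫ y in Ioi 0, g y := by
  rw [← Real.range_exp, ← image_univ, integral_image_eq_integral_abs_deriv_smul MeasurableSet.univ
    (fun x _ => (Real.hasDerivAt_exp x).hasDerivWithinAt) Real.exp_injective.injOn]
  simp only [Real.abs_exp, Measure.restrict_univ]

lemma integrable_exp_smul_comp_exp {E : Type*} [NormedAddCommGroup E] [NormedSpace ℝ E]
    {g : ℝ → E} :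
    Integrable (fun x => Real.exp x • g (Real.exp x)) ↔ IntegrableOn g (Ioi 0) := by
  rw [← Real.range_exp, ← image_univ,
    integrableOn_image_iff_integrableOn_abs_deriv_smul MeasurableSet.univ
      (fun x _ => (Real.hasDerivAt_exp x).hasDerivWithinAt) Real.exp_injective.injOn]
  simp only [Real.abs_exp, integrableOn_univ]

/-- The unnormalised Gamma density `y ^ a * exp (-c * y)` with respect to `dy / y`, in the
logarithmic coordinate `y = exp x`. -/
noncomputable def gammaWeight (a c x : ℝ) : ℝ := Real.exp (a * x - c * Real.exp x)

variable {a b c x : ℝ}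

lemma gammaWeight_pos : 0 < gammaWeight a c x := Real.exp_pos _

@[fun_prop]
lemma continuous_gammaWeight : Continuous (gammaWeight a c) := by
  unfold gammaWeight
  fun_prop

lemma gammaWeight_add (a b c x : ℝ) :
    gammaWeight (a + b) c x = gammaWeight a c x * Real.exp (b * x) := by
  rw [gammaWeight, gammaWeight, ← Real.exp_add]
  ring_nf

lemma gammaWeight_eq_exp_smul (a c x : ℝ) :
    gammaWeight a c x =
      Real.exp x • (Real.exp x ^ (a - 1) * Real.exp (-(c * Real.exp x))) := by
  rw [gammaWeight, smul_eq_mul, ← Real.exp_mul, ← Real.exp_add, ← Real.exp_add]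
  ring_nf

lemma integrable_gammaWeight (ha : 0 < a) (hc : 0 < c) : Integrable (gammaWeight a c) := by
  have h := integrableOn_rpow_mul_exp_neg_mul_rpow (p := 1) (s := a - 1) (by linarith) one_pos hc
  simp only [Real.rpow_one, neg_mul] at h
  simpa only [← gammaWeight_eq_exp_smul] using integrable_exp_smul_comp_exp.2 h

lemma integral_gammaWeight (ha : 0 < a) (hc : 0 < c) :
    ∫ x, gammaWeight a c x = c ^ (-a) * Real.Gamma a := by
  simp_rw [gammaWeight_eq_exp_smul]
  rw [integral_exp_smul_comp_exp fun y => y ^ (a - 1) * Real.exp (-(c * y)),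
    Real.integral_rpow_mul_exp_neg_mul_Ioi ha hc, one_div, Real.inv_rpow hc.le, Real.rpow_neg hc.le]

lemma tendsto_gammaWeight_atBot (ha : 0 < a) (c : ℝ) :
    Tendsto (gammaWeight a c) atBot (𝓝 0) := by
  refine Real.tendsto_exp_atBot.comp (Tendsto.atBot_add (C := -(c * 0)) ?_ ?_)
  · exact tendsto_id.const_mul_atBot ha
  · exact (Real.tendsto_exp_atBot.const_mul c).neg

lemma tendsto_gammaWeight_atTop (a : ℝ) (hc : 0 < c) :
    Tendsto (gammaWeight a c) atTop (𝓝 0) := by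
  refine ((tendsto_rpow_mul_exp_neg_mul_atTop_nhds_zero a c hc).comp
    Real.tendsto_exp_atTop).congr fun x => ?_
  rw [Function.comp_apply, ← Real.exp_mul, ← Real.exp_add, gammaWeight]
  ring_nf

lemma gammaWeight_anti {c' : ℝ} (h : c ≤ c') : gammaWeight a c' x ≤ gammaWeight a c x :=
  Real.exp_le_exp.2 (by gcongr)

lemma gammaWeight_le_add {s : ℝ} (has : a ≤ s) (hsb : s ≤ b) :
    gammaWeight s c x ≤ gammaWeight a c x + gammaWeight b c x := by
  rcases le_total 0 x with hx | hx
  · exact le_add_of_nonneg_of_le gammaWeight_pos.le (Real.exp_le_exp.2 (by gcongr))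
  · exact le_add_of_le_of_nonneg
      (Real.exp_le_exp.2 (sub_le_sub_right (mul_le_mul_of_nonpos_right has hx) _))
      gammaWeight_pos.le

lemma integrableOn_Ioi_gammaWeight (a X : ℝ) (hc : 0 < c) :
    IntegrableOn (gammaWeight a c) (Ioi X) := by
  have h := ((integrable_gammaWeight (by positivity : 0 < |a| + 1) hc).const_mul
    (Real.exp ((a - (|a| + 1)) * X))).integrableOn (s := Ioi X)
  refine h.mono' (by fun_prop) ((ae_restrict_iff' measurableSet_Ioi).2 (ae_of_all _ fun x hx => ?_))
  rw [Real.norm_eq_abs, abs_of_pos gammaWeight_pos, gammaWeight, gammaWeight, ← Real.exp_add]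
  refine Real.exp_le_exp.2 ?_
  nlinarith [le_abs_self a, mem_Ioi.1 hx]

/-- The first logarithmic moment of `gammaWeight a c`; the summand `π` accounts for the imaginary
part of a point `x + y * I` with `|y| ≤ π`. -/
noncomputable def logMoment (a c : ℝ) : ℝ := ∫ x, gammaWeight a c x * (|x| + π)

lemma logMoment_nonneg (a c : ℝ) : 0 ≤ logMoment a c :=
  integral_nonneg fun _ => mul_nonneg gammaWeight_pos.le (by positivity)

lemma abs_le_exp_add_exp_neg (x : ℝ) : |x| ≤ Real.exp x + Real.exp (-x) := by
  rw [abs_le]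
  constructor <;> linarith [Real.add_one_le_exp x, Real.add_one_le_exp (-x), Real.exp_pos x,
    Real.exp_pos (-x)]

lemma integrable_gammaWeight_mul_abs (ha : 0 < a) (hc : 0 < c) :
    Integrable fun x => gammaWeight a c x * |x| := by
  have h := ((integrable_gammaWeight (by linarith : 0 < a + a / 2) hc).add
    (integrable_gammaWeight (by linarith : 0 < a + -(a / 2)) hc)).const_mul (2 / a)
  refine h.mono' (by fun_prop) (ae_of_all _ fun x => ?_)
  have hx : |x| ≤ 2 / a * (Real.exp (a / 2 * x) + Real.exp (-(a / 2) * x)) := by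
    have h := abs_le_exp_add_exp_neg (a / 2 * x)
    rw [abs_mul, abs_of_pos (half_pos ha), ← neg_mul, ← le_div_iff₀' (half_pos ha)] at h
    exact h.trans_eq (by field_simp)
  rw [Real.norm_eq_abs, abs_mul, abs_abs, abs_of_pos gammaWeight_pos, Pi.add_apply,
    gammaWeight_add, gammaWeight_add, ← mul_add, mul_left_comm]
  exact mul_le_mul_of_nonneg_left hx gammaWeight_pos.le

lemma integrable_gammaWeight_mul_abs_add_pi (ha : 0 < a) (hc : 0 < c) :
    Integrable fun x => gammaWeight a c x * (|x| + π) := by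
  simp only [mul_add]
  exact (integrable_gammaWeight_mul_abs ha hc).add ((integrable_gammaWeight ha hc).mul_const _)

lemma logMoment_le_add {s : ℝ} (ha : 0 < a) (hc : 0 < c) (has : a ≤ s) (hsb : s ≤ b) :
    logMoment s c ≤ logMoment a c + logMoment b c := by
  have hs := ha.trans_le has
  have hia := integrable_gammaWeight_mul_abs_add_pi ha hc
  have hib := integrable_gammaWeight_mul_abs_add_pi (hs.trans_le hsb) hc
  rw [logMoment, logMoment, logMoment, ← integral_add hia hib]
  refine integral_mono (integrable_gammaWeight_mul_abs_add_pi hs hc) (hia.add hib) fun x => ?_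
  rw [← add_mul]
  exact mul_le_mul_of_nonneg_right (gammaWeight_le_add has hsb) (by positivity)

lemma gammaWeight_sub_log {t : ℝ} (ht : 0 < t) (a c x : ℝ) :
    gammaWeight a (t * c) (x - Real.log t) = t ^ (-a) * gammaWeight a c x := by
  rw [gammaWeight, gammaWeight, Real.rpow_def_of_pos ht, ← Real.exp_add,
    Real.exp_sub x (Real.log t), Real.exp_log ht]
  congr 1
  field_simp
  ring

lemma logMoment_mul_le {t : ℝ} (ha : 0 < a) (hc : 0 < c) (ht : 1 ≤ t) :
    logMoment a (t * c) ≤ t ^ (-a) * (1 + Real.log t) * logMoment a c := by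
  have ht0 : 0 < t := one_pos.trans_le ht
  have hlog := Real.log_nonneg ht
  rw [logMoment, logMoment, ← integral_sub_right_eq_self _ (Real.log t), ← integral_const_mul]
  refine integral_mono_of_nonneg (ae_of_all _ fun x => ?_)
    ((integrable_gammaWeight_mul_abs_add_pi ha hc).const_mul _) (ae_of_all _ fun x => ?_)
  · exact mul_nonneg gammaWeight_pos.le (by positivity)
  · have hshift : |x - Real.log t| + π ≤ (1 + Real.log t) * (|x| + π) := by
      have h := abs_sub x (Real.log t)
      rw [abs_of_nonneg hlog] at h
      nlinarith [Real.pi_gt_three, abs_nonneg x]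
    simp only [gammaWeight_sub_log ht0]
    calc t ^ (-a) * gammaWeight a c x * (|x - Real.log t| + π)
        ≤ t ^ (-a) * gammaWeight a c x * ((1 + Real.log t) * (|x| + π)) := by
          gcongr
          exact mul_nonneg (Real.rpow_nonneg ht0.le _) gammaWeight_pos.le
      _ = _ := by ring

end GammaWeight

section StripContour

variable {E : Type*} [NormedAddCommGroup E] [NormedSpace ℂ E] {f : ℂ → E} {p q : ℝ} {B : ℝ → ℝ}

lemma integral_horizontal_sub_eq_vertical [CompleteSpace E] (hpq : p ≤ q)
    (hf : ∀ x y : ℝ, y ∈ Icc p q → DifferentiableAt ℂ f (x + y * I)) (M N : ℝ) :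
    (∫ x in M..N, f (x + q * I)) - (∫ x in M..N, f (x + p * I)) =
      I • (∫ y in p..q, f (N + y * I)) - I • (∫ y in p..q, f (M + y * I)) := by
  have hrect := integral_boundary_rect_eq_zero_of_differentiableOn f (M + p * I) (N + q * I)
    fun w hw => by
      have him : w.im ∈ Icc p q := by simpa [uIcc_of_le hpq] using hw.2
      simpa only [re_add_im] using (hf w.re w.im him).differentiableWithinAt
  simp only [add_re, add_im, ofReal_re, ofReal_im, mul_re, mul_im, I_re, I_im, mul_zero, mul_one,
    sub_zero, add_zero, zero_add] at hrect
  rw [sub_eq_sub_iff_add_eq_add, ← sub_eq_zero, ← neg_eq_zero, ← hrect]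
  abel

lemma tendsto_integral_vertical {L : Filter ℝ} (hpq : p ≤ q) (hB : Tendsto B L (𝓝 0))
    (hf : ∀ᶠ x : ℝ in L, ∀ y ∈ Icc p q, ‖f (x + y * I)‖ ≤ B x) :
    Tendsto (fun x : ℝ => I • ∫ y in p..q, f (x + y * I)) L (𝓝 0) := by
  refine squeeze_zero_norm' (a := fun x => B x * |q - p|) (hf.mono fun x hx => ?_) ?_
  · rw [norm_smul, norm_I, one_mul]
    exact intervalIntegral.norm_integral_le_of_norm_le_const fun y hy =>
      hx y (Ioc_subset_Icc_self (uIoc_of_le hpq ▸ hy))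
  · simpa only [zero_mul] using hB.mul_const |q - p|

lemma integral_horizontal_eq [CompleteSpace E] (hpq : p ≤ q)
    (hf : ∀ x y : ℝ, y ∈ Icc p q → DifferentiableAt ℂ f (x + y * I))
    (hB : ∀ x : ℝ, ∀ y ∈ Icc p q, ‖f (x + y * I)‖ ≤ B x)
    (htop : Tendsto B atTop (𝓝 0)) (hbot : Tendsto B atBot (𝓝 0))
    (hp : Integrable fun x : ℝ => f (x + p * I)) (hq : Integrable fun x : ℝ => f (x + q * I)) :
    ∫ x : ℝ, f (x + q * I) = ∫ x : ℝ, f (x + p * I) := by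
  have hhor := (intervalIntegral_tendsto_integral hq tendsto_neg_atTop_atBot tendsto_id).sub
    (intervalIntegral_tendsto_integral hp tendsto_neg_atTop_atBot tendsto_id)
  have hver := (tendsto_integral_vertical hpq htop (Eventually.of_forall hB)).sub
    ((tendsto_integral_vertical hpq hbot (Eventually.of_forall hB)).comp tendsto_neg_atTop_atBot)
  rw [sub_zero] at hver
  exact sub_eq_zero.1 (tendsto_nhds_unique
    (hhor.congr fun N => integral_horizontal_sub_eq_vertical hpq hf (-N) N) hver)

/-- The integral of `f` along the boundary of the strip `|Im w| ≤ φ`. Under `s = exp w` these lines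
are the rays `arg s = ±φ`. -/
noncomputable def stripIntegral (φ : ℝ) (f : ℂ → E) : E :=
  (∫ x : ℝ, f (x + φ * I)) - ∫ x : ℝ, f (x + ((-φ : ℝ) : ℂ) * I)

/-- The integral of `f` along the boundary of the half-strip `|Im w| ≤ φ`, `X ≤ Re w`, traversed
from `+∞ - φ * I` to `+∞ + φ * I`. Under `s = exp w` this is Hankel's contour: the rays
`arg s = ±φ` outside the circle of radius `exp X`, joined by an arc of that circle. -/
noncomputable def hankelIntegral (φ X : ℝ) (f : ℂ → E) : E :=
  (∫ x in Ioi X, f (x + φ * I)) - (∫ x in Ioi X, f (x + ((-φ : ℝ) : ℂ) * I)) +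
    I • ∫ y in (-φ)..φ, f (X + y * I)

lemma stripIntegral_eq_hankelIntegral [CompleteSpace E] {φ : ℝ} (hφ : 0 ≤ φ) (X : ℝ)
    (hf : ∀ x y : ℝ, y ∈ Icc (-φ) φ → DifferentiableAt ℂ f (x + y * I))
    (hB : ∀ x ≤ X, ∀ y ∈ Icc (-φ) φ, ‖f (x + y * I)‖ ≤ B x) (hbot : Tendsto B atBot (𝓝 0))
    (hlower : Integrable fun x : ℝ => f (x + ((-φ : ℝ) : ℂ) * I))
    (hupper : Integrable fun x : ℝ => f (x + φ * I)) :
    stripIntegral φ f = hankelIntegral φ X f := by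
  have hφ' : -φ ≤ φ := neg_le_self hφ
  have hhor :=
    (intervalIntegral_tendsto_integral_Iic X hupper.integrableOn tendsto_id).sub
      (intervalIntegral_tendsto_integral_Iic X hlower.integrableOn tendsto_id)
  have hver := (tendsto_const_nhds (x := I • ∫ y in (-φ)..φ, f (X + y * I))).sub
    (tendsto_integral_vertical hφ' hbot ((eventually_le_atBot X).mono hB))
  rw [sub_zero] at hver
  rw [stripIntegral, hankelIntegral, ← tendsto_nhds_unique
      (hhor.congr fun M => integral_horizontal_sub_eq_vertical hφ' hf M X) hver,
    ← intervalIntegral.integral_Iic_add_Ioi (b := X) hlower.integrableOn hlower.integrableOn,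
    ← intervalIntegral.integral_Iic_add_Ioi (b := X) hupper.integrableOn hupper.integrableOn]
  abel

end StripContour

section HankelKernel

/-- The integrand `exp (t * s) * s ^ (b - 1) ds` of Hankel's loop integral for `1 / Γ (1 - b)`, in
the coordinate `s = exp w`. -/
noncomputable def hankelKernel (t b : ℝ) (w : ℂ) : ℂ := cexp (t * cexp w + b * w)

variable {t b y φ : ℝ}

lemma hankelKernel_add (t a b : ℝ) (w : ℂ) :
    hankelKernel t (a + b) w = hankelKernel t a w * cexp (b * w) := by
  rw [hankelKernel, hankelKernel, ← Complex.exp_add]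
  push_cast
  ring_nf

lemma differentiable_hankelKernel : Differentiable ℂ (hankelKernel t b) := by
  unfold hankelKernel
  fun_prop

@[fun_prop]
lemma continuous_hankelKernel : Continuous (hankelKernel t b) :=
  differentiable_hankelKernel.continuous

lemma hasDerivAt_hankelKernel (t b : ℝ) (w : ℂ) :
    HasDerivAt (hankelKernel t b) (t * hankelKernel t (b + 1) w + b * hankelKernel t b w) w := by
  have h : HasDerivAt (fun z : ℂ => t * cexp z + b * z) (t * cexp w + b * 1) w :=
    ((Complex.hasDerivAt_exp w).const_mul _).add ((hasDerivAt_id w).const_mul _)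
  refine h.cexp.congr_deriv ?_
  rw [hankelKernel_add, hankelKernel, ofReal_one, one_mul]
  ring

lemma norm_hankelKernel (t b x y : ℝ) :
    ‖hankelKernel t b (x + y * I)‖ = gammaWeight b (-(t * Real.cos y)) x := by
  rw [hankelKernel, norm_exp, gammaWeight]
  simp only [add_re, mul_re, ofReal_re, ofReal_im, add_im, mul_im, I_re, I_im, exp_re]
  ring_nf

lemma norm_hankelKernel_le (ht : 0 < t) (hφ : φ ∈ Ioc (π / 2) π) (hy : y ∈ Icc φ π) (x : ℝ) :
    ‖hankelKernel t b (x + y * I)‖ ≤ gammaWeight b (-(t * Real.cos φ)) x := by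
  rw [norm_hankelKernel]
  refine gammaWeight_anti (neg_le_neg (mul_le_mul_of_nonneg_left ?_ ht.le))
  exact Real.cos_le_cos_of_nonneg_of_le_pi (by linarith [hφ.1, Real.pi_pos]) hy.2 hy.1

lemma cos_neg_of_mem_Ioc (hφ : φ ∈ Ioc (π / 2) π) : Real.cos φ < 0 :=
  Real.cos_neg_of_pi_div_two_lt_of_lt hφ.1 (by linarith [hφ.2, Real.pi_pos])

lemma integrable_hankelKernel (ht : 0 < t) (hb : 0 < b) (hy : Real.cos y < 0) :
    Integrable fun x : ℝ => hankelKernel t b (x + y * I) :=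
  (integrable_gammaWeight hb (neg_pos.2 (mul_neg_of_pos_of_neg ht hy))).mono'
    (by fun_prop) (ae_of_all _ fun x => (norm_hankelKernel t b x y).le)

lemma integrableOn_Ioi_hankelKernel (X : ℝ) (ht : 0 < t) (hy : Real.cos y < 0) :
    IntegrableOn (fun x : ℝ => hankelKernel t b (x + y * I)) (Ioi X) :=
  (integrableOn_Ioi_gammaWeight b X (neg_pos.2 (mul_neg_of_pos_of_neg ht hy))).mono'
    (by fun_prop) (ae_of_all _ fun x => (norm_hankelKernel t b x y).le)

lemma hankelKernel_conj (t b x y : ℝ) :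
    hankelKernel t b (x + ((-y : ℝ) : ℂ) * I) =
      (starRingEnd ℂ) (hankelKernel t b (x + y * I)) := by
  simp only [hankelKernel, ← exp_conj, map_add, map_mul, conj_ofReal, conj_I, ofReal_neg,
    neg_mul, mul_neg]

lemma hankelKernel_add_pi_mul_I (t b x : ℝ) :
    hankelKernel t b (x + π * I) = (gammaWeight b t x : ℝ) * cexp (b * π * I) := by
  rw [hankelKernel, gammaWeight, Complex.exp_add x, Complex.exp_pi_mul_I]
  push_cast
  rw [← Complex.exp_add]
  ring_nf

-- On `Im w = π` the kernel is a real Gamma density up to a phase, so the contour is moved there.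
lemma integral_hankelKernel (ht : 0 < t) (hb : 0 < b) (hφ : φ ∈ Ioc (π / 2) π) :
    ∫ x : ℝ, hankelKernel t b (x + φ * I) =
      (t ^ (-b) * Real.Gamma b : ℝ) * cexp (b * π * I) := by
  have hcos := cos_neg_of_mem_Ioc hφ
  rw [← integral_horizontal_eq hφ.2 (fun x y _ => differentiable_hankelKernel _)
    (fun x y hy => norm_hankelKernel_le ht hφ hy x)
    (tendsto_gammaWeight_atTop b (neg_pos.2 (mul_neg_of_pos_of_neg ht hcos)))
    (tendsto_gammaWeight_atBot hb _) (integrable_hankelKernel ht hb hcos)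
    (integrable_hankelKernel ht hb (by norm_num))]
  simp_rw [hankelKernel_add_pi_mul_I]
  rw [integral_mul_const, integral_complex_ofReal, integral_gammaWeight hb ht]

lemma stripIntegral_hankelKernel_eq_sin (ht : 0 < t) (hb : 0 < b) (hφ : φ ∈ Ioc (π / 2) π) :
    stripIntegral φ (hankelKernel t b) =
      2 * I * (t ^ (-b) * (Real.Gamma b * Real.sin (π * b)) : ℝ) := by
  rw [stripIntegral]
  simp_rw [hankelKernel_conj]
  rw [integral_conj, sub_conj, integral_hankelKernel ht hb hφ, im_ofReal_mul, ← ofReal_mul b π,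
    exp_ofReal_mul_I_im, mul_comm b π]
  push_cast
  ring

lemma gamma_mul_sin_pi_mul (hb : 0 < b) :
    Real.Gamma b * Real.sin (π * b) = π * (Real.Gamma (1 - b))⁻¹ := by
  have hreflect := Real.Gamma_mul_Gamma_one_sub b
  rcases eq_or_ne (Real.sin (π * b)) 0 with hsin | hsin
  · rw [hsin, div_zero] at hreflect
    rw [hsin, (mul_eq_zero.1 hreflect).resolve_left (Real.Gamma_pos_of_pos hb).ne']
    simp only [mul_zero, inv_zero]
  · rw [eq_div_iff hsin] at hreflect
    have hΓ : Real.Gamma (1 - b) ≠ 0 := fun h => by simp [h, Real.pi_ne_zero.symm] at hreflect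
    rw [eq_mul_inv_iff_mul_eq₀ hΓ]
    linear_combination hreflect

lemma stripIntegral_hankelKernel (ht : 0 < t) (hb : 0 < b) (hφ : φ ∈ Ioc (π / 2) π) :
    stripIntegral φ (hankelKernel t b) =
      2 * π * I * ((t ^ (-b) : ℝ) * (Complex.Gamma (1 - b))⁻¹) := by
  rw [stripIntegral_hankelKernel_eq_sin ht hb hφ, gamma_mul_sin_pi_mul hb, ← ofReal_one,
    ← ofReal_sub, Complex.Gamma_ofReal]
  push_cast
  ring

lemma hankelIntegral_hankelKernel_of_pos (X : ℝ) (ht : 0 < t) (hb : 0 < b)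
    (hφ : φ ∈ Ioc (π / 2) π) :
    hankelIntegral φ X (hankelKernel t b) =
      2 * π * I * ((t ^ (-b) : ℝ) * (Complex.Gamma (1 - b))⁻¹) := by
  have hcos := cos_neg_of_mem_Ioc hφ
  rw [← stripIntegral_hankelKernel ht hb hφ, stripIntegral_eq_hankelIntegral
    (B := gammaWeight b (-t)) (by linarith [hφ.1, Real.pi_pos]) X
    (fun x y _ => differentiable_hankelKernel _) (fun x _ y _ => ?_)
    (tendsto_gammaWeight_atBot hb _) (integrable_hankelKernel ht hb (by rwa [Real.cos_neg]))
    (integrable_hankelKernel ht hb hcos)]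
  rw [norm_hankelKernel]
  exact gammaWeight_anti (neg_le_neg (mul_le_of_le_one_right ht.le (Real.cos_le_one y)))

lemma continuous_integral_Ioi_hankelKernel (X : ℝ) (ht : 0 < t) (hy : Real.cos y < 0) :
    Continuous fun b => ∫ x in Ioi X, hankelKernel t b (x + y * I) := by
  have hc := neg_pos.2 (mul_neg_of_pos_of_neg ht hy)
  refine continuous_iff_continuousAt.2 fun b₀ => continuousAt_of_dominated
    (Eventually.of_forall fun b => by fun_prop) ?_
    ((integrableOn_Ioi_gammaWeight (b₀ - 1) X hc).add
      (integrableOn_Ioi_gammaWeight (b₀ + 1) X hc))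
    (ae_of_all _ fun x => by unfold hankelKernel; fun_prop)
  filter_upwards [Icc_mem_nhds (sub_one_lt b₀) (lt_add_one b₀)] with b hb
  exact ae_of_all _ fun x => (norm_hankelKernel t b x y).trans_le (gammaWeight_le_add hb.1 hb.2)

lemma continuous_hankelIntegral_hankelKernel (X : ℝ) (ht : 0 < t) (hφ : Real.cos φ < 0) :
    Continuous fun b => hankelIntegral φ X (hankelKernel t b) := by
  have harc : Continuous fun b => ∫ y in (-φ)..φ, hankelKernel t b (X + y * I) := by
    refine intervalIntegral.continuous_parametric_intervalIntegral_of_continuous' ?_ _ _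
    unfold hankelKernel Function.uncurry
    fun_prop
  exact ((continuous_integral_Ioi_hankelKernel X ht hφ).sub
    (continuous_integral_Ioi_hankelKernel X ht (by rwa [Real.cos_neg]))).add (harc.const_smul I)

lemma mul_integral_Ioi_hankelKernel_add_one (X : ℝ) (ht : 0 < t) (hy : Real.cos y < 0) :
    t * (∫ x in Ioi X, hankelKernel t (b + 1) (x + y * I)) +
        b * (∫ x in Ioi X, hankelKernel t b (x + y * I)) =
      -hankelKernel t b (X + y * I) := by
  have hint₁ := (integrableOn_Ioi_hankelKernel (b := b + 1) X ht hy).const_mul (t : ℂ)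
  have hint₀ := (integrableOn_Ioi_hankelKernel (b := b) X ht hy).const_mul (b : ℂ)
  rw [← integral_const_mul, ← integral_const_mul, ← integral_add hint₁ hint₀, ← zero_sub]
  refine integral_Ioi_of_hasDerivAt_of_tendsto' (f := fun x : ℝ => hankelKernel t b (x + y * I))
    (fun x _ => ?_) (hint₁.add hint₀) (squeeze_zero_norm (fun x => (norm_hankelKernel t b x y).le)
      (tendsto_gammaWeight_atTop b (neg_pos.2 (mul_neg_of_pos_of_neg ht hy))))
  exact ((hasDerivAt_hankelKernel t b _).comp_add_const (x : ℂ) (y * I)).comp_ofReal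

lemma mul_integral_arc_hankelKernel_add_one (t b φ X : ℝ) :
    I * (t * (∫ y in (-φ)..φ, hankelKernel t (b + 1) (X + y * I)) +
        b * (∫ y in (-φ)..φ, hankelKernel t b (X + y * I))) =
      hankelKernel t b (X + φ * I) - hankelKernel t b (X + ((-φ : ℝ) : ℂ) * I) := by
  have hint (a c : ℝ) : IntervalIntegrable (fun y : ℝ => (c : ℂ) * hankelKernel t a (X + y * I))
      volume (-φ) φ := Continuous.intervalIntegrable (by fun_prop) _ _
  rw [← intervalIntegral.integral_const_mul, ← intervalIntegral.integral_const_mul,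
    ← intervalIntegral.integral_add (hint _ _) (hint _ _), ← intervalIntegral.integral_const_mul]
  refine intervalIntegral.integral_eq_sub_of_hasDerivAt
    (f := fun y : ℝ => hankelKernel t b (X + y * I)) (fun y _ => ?_)
    (((hint _ _).add (hint _ _)).const_mul I)
  have hline : HasDerivAt (fun z : ℂ => X + z * I) I y :=
    (((hasDerivAt_id (y : ℂ)).mul_const I).const_add (X : ℂ)).congr_deriv (one_mul I)
  rw [mul_comm I]
  exact ((hasDerivAt_hankelKernel t b _).comp (y : ℂ) hline).comp_ofReal

lemma mul_hankelIntegral_hankelKernel_add_one (X : ℝ) (ht : 0 < t) (hφ : Real.cos φ < 0) :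
    t * hankelIntegral φ X (hankelKernel t (b + 1)) =
      -(b * hankelIntegral φ X (hankelKernel t b)) := by
  have hupper := mul_integral_Ioi_hankelKernel_add_one (b := b) X ht hφ
  have hlower := mul_integral_Ioi_hankelKernel_add_one (b := b) (y := -φ) X ht
    (by rwa [Real.cos_neg])
  have harc := mul_integral_arc_hankelKernel_add_one t b φ X
  simp only [hankelIntegral, smul_eq_mul]
  linear_combination hupper - hlower + harc

lemma hankelIntegral_hankelKernel_of_nonneg (X : ℝ) (ht : 0 < t) (hb : 0 ≤ b)
    (hφ : φ ∈ Ioc (π / 2) π) :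
    hankelIntegral φ X (hankelKernel t b) =
      2 * π * I * ((t ^ (-b) : ℝ) * (Complex.Gamma (1 - b))⁻¹) := by
  have hpow : Continuous fun b : ℝ => t ^ (-b) :=
    continuous_iff_continuousAt.2 fun b =>
      (Real.continuousAt_const_rpow ht.ne').comp continuous_neg.continuousAt
  have hgamma : Continuous fun b : ℝ => (Complex.Gamma (1 - b))⁻¹ :=
    differentiable_one_div_Gamma.continuous.comp (continuous_const.sub continuous_ofReal)
  have hclosure := EqOn.closure
    (fun b hb => hankelIntegral_hankelKernel_of_pos X ht (mem_Ioi.1 hb) hφ)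
    (continuous_hankelIntegral_hankelKernel X ht (cos_neg_of_mem_Ioc hφ))
    (continuous_const.mul ((continuous_ofReal.comp hpow).mul hgamma))
  rw [closure_Ioi] at hclosure
  exact hclosure hb

lemma hankelIntegral_hankelKernel (b X : ℝ) (ht : 0 < t) (hφ : φ ∈ Ioc (π / 2) π) :
    hankelIntegral φ X (hankelKernel t b) =
      2 * π * I * ((t ^ (-b) : ℝ) * (Complex.Gamma (1 - b))⁻¹) := by
  obtain ⟨n, hn⟩ := exists_nat_ge (-b)
  induction n generalizing b with
  | zero => exact hankelIntegral_hankelKernel_of_nonneg X ht (by simpa using hn) hφ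
  | succ n ih =>
    rcases le_or_gt 0 b with hb | hb
    · exact hankelIntegral_hankelKernel_of_nonneg X ht hb hφ
    have hrec := mul_hankelIntegral_hankelKernel_add_one (b := b) X ht (cos_neg_of_mem_Ioc hφ)
    have hpow : t ^ (-b) = t * t ^ (-(b + 1)) := by
      rw [neg_add, ← sub_eq_add_neg, Real.rpow_sub_one ht.ne']
      field_simp
    have hgamma := one_div_Gamma_eq_self_mul_one_div_Gamma_add_one (-b : ℂ)
    rw [neg_add_eq_sub] at hgamma
    rw [ih (b + 1) (by push_cast at hn; linarith), show (1 - (b + 1 : ℝ) : ℂ) = -b by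
      push_cast; ring, hgamma] at hrec
    refine mul_left_cancel₀ (neg_ne_zero.2 (ofReal_ne_zero.2 hb.ne)) ?_
    rw [neg_mul, ← hrec, hpow]
    push_cast
    ring

end HankelKernel

section Resolvent

/-- The closed sector `|arg s| ≤ φ` of opening `φ ∈ (π / 2, π]` stays away from the point `l`,
uniformly in the scale-invariant sense measured by `κ`. The sector is encoded by
`‖s‖ * cos φ ≤ re s`. -/
structure IsSectorSeparated (φ κ : ℝ) (l : ℂ) : Prop where
  angle_mem : φ ∈ Ioc (π / 2) π
  pos : 0 < κ
  ne_zero : l ≠ 0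
  le_norm_sub : ∀ s : ℂ, ‖s‖ * Real.cos φ ≤ s.re → κ * (‖s‖ + ‖l‖) ≤ ‖s - l‖

lemma le_norm_sub_of_neg_mul_norm_le_re {m : ℝ} {l s : ℂ} (hm : 0 < m) (hm1 : m ≤ 1)
    (hl : m * ‖l‖ ≤ -l.re) (hs : -(m / 2 * ‖s‖) ≤ s.re) : m / 10 * (‖s‖ + ‖l‖) ≤ ‖s - l‖ := by
  have hre : s.re - l.re ≤ ‖s - l‖ := (sub_re s l).symm.trans_le (re_le_norm (s - l))
  have hnorm : ‖s‖ - ‖l‖ ≤ ‖s - l‖ := norm_sub_norm_le s l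
  have hs0 := norm_nonneg s
  rcases le_total ‖s‖ (3 / 2 * ‖l‖) with h | h
  · nlinarith [mul_nonneg hm.le (sub_nonneg.2 h)]
  · nlinarith [mul_nonneg (sub_nonneg.2 hm1) hs0,
      mul_nonneg (sub_nonneg.2 hm1) (norm_nonneg l)]

lemma isSectorSeparated_of_mul_norm_le_neg_re {m : ℝ} {l : ℂ} (hm : 0 < m) (hl : l ≠ 0)
    (hre : m * ‖l‖ ≤ -l.re) : IsSectorSeparated (Real.arccos (-(m / 2))) (m / 10) l := by
  have hm1 : m ≤ 1 := (mul_le_iff_le_one_left (norm_pos_iff.2 hl)).1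
    (hre.trans ((neg_le_abs _).trans (abs_re_le_norm l)))
  have hcos : Real.cos (Real.arccos (-(m / 2))) = -(m / 2) :=
    Real.cos_arccos (by linarith) (by linarith)
  refine ⟨⟨?_, Real.arccos_le_pi _⟩, by positivity, hl, fun s hs => ?_⟩
  · exact lt_of_not_ge fun h => by
      linarith [Real.arccos_le_pi_div_two.1 h]
  · exact le_norm_sub_of_neg_mul_norm_le_re hm hm1 hre (by rw [hcos] at hs; linarith)

/-- The integrand `exp (t * s) / (s ^ ρ - l) ds`, the inverse Laplace transform of the resolvent
`(s ^ ρ - l)⁻¹`, in the coordinate `s = exp w`. -/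
noncomputable def resolventKernel (l : ℂ) (t ρ : ℝ) (w : ℂ) : ℂ :=
  hankelKernel t 1 w / (cexp (ρ * w) - l)

/-- The Riemann–Liouville relaxation kernel `t ^ (ρ - 1) * E_{ρ,ρ}(l * t ^ ρ)`. -/
noncomputable def riemannLiouvilleKernel (l : ℂ) (t ρ : ℝ) : ℂ :=
  ((t ^ (ρ - 1) : ℝ) : ℂ) * mittagLeffler2 ρ (l * ((t ^ ρ : ℝ) : ℂ))

variable {φ κ ρ t y X : ℝ} {l w : ℂ}

lemma norm_exp_ofReal_mul_add_mul_I (ρ x y : ℝ) :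
    ‖cexp (ρ * (x + y * I))‖ = Real.exp (ρ * x) := by
  rw [norm_exp, re_ofReal_mul, add_re, ofReal_re, re_ofReal_mul, I_re, mul_zero, add_zero]

namespace IsSectorSeparated

lemma cos_angle_neg (h : IsSectorSeparated φ κ l) : Real.cos φ < 0 := cos_neg_of_mem_Ioc h.angle_mem

lemma angle_pos (h : IsSectorSeparated φ κ l) : 0 < φ := Real.pi_div_two_pos.trans h.angle_mem.1

lemma neg_angle_mem_Icc (h : IsSectorSeparated φ κ l) : -φ ∈ Icc (-φ) φ :=
  left_mem_Icc.2 (neg_le_self h.angle_pos.le)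

lemma angle_mem_Icc (h : IsSectorSeparated φ κ l) : φ ∈ Icc (-φ) φ :=
  right_mem_Icc.2 (neg_le_self h.angle_pos.le)

lemma le_norm_exp_sub (h : IsSectorSeparated φ κ l) (hρ : ρ ∈ Icc 0 1) (hy : y ∈ Icc (-φ) φ)
    (x : ℝ) : κ * (Real.exp (ρ * x) + ‖l‖) ≤ ‖cexp (ρ * (x + y * I)) - l‖ := by
  have hy' : |y| ≤ φ := abs_le.2 hy
  have hangle : Real.cos φ ≤ Real.cos (ρ * y) := by
    rw [← Real.cos_abs (ρ * y), abs_mul, abs_of_nonneg hρ.1]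
    exact Real.cos_le_cos_of_nonneg_of_le_pi (mul_nonneg hρ.1 (abs_nonneg y)) h.angle_mem.2
      ((mul_le_of_le_one_left (abs_nonneg y) hρ.2).trans hy')
  rw [← norm_exp_ofReal_mul_add_mul_I ρ x y]
  refine h.le_norm_sub _ ?_
  rw [norm_exp_ofReal_mul_add_mul_I, exp_re, re_ofReal_mul, im_ofReal_mul]
  simpa using mul_le_mul_of_nonneg_left hangle (Real.exp_pos (ρ * x)).le

lemma mul_norm_le_norm_exp_sub (h : IsSectorSeparated φ κ l) (hρ : ρ ∈ Icc 0 1)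
    (hy : y ∈ Icc (-φ) φ) (x : ℝ) : κ * ‖l‖ ≤ ‖cexp (ρ * (x + y * I)) - l‖ :=
  (mul_le_mul_of_nonneg_left (le_add_of_nonneg_left (Real.exp_pos _).le) h.pos.le).trans
    (h.le_norm_exp_sub hρ hy x)

lemma exp_sub_ne_zero (h : IsSectorSeparated φ κ l) (hρ : ρ ∈ Icc 0 1) (hy : y ∈ Icc (-φ) φ)
    (x : ℝ) : cexp (ρ * (x + y * I)) - l ≠ 0 :=
  norm_pos_iff.1 ((mul_pos h.pos (norm_pos_iff.2 h.ne_zero)).trans_le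
    (h.mul_norm_le_norm_exp_sub hρ hy x))

lemma norm_resolventKernel_le (h : IsSectorSeparated φ κ l) (hρ : ρ ∈ Icc 0 1)
    (hy : y ∈ Icc (-φ) φ) (t x : ℝ) :
    ‖resolventKernel l t ρ (x + y * I)‖ ≤
      gammaWeight 1 (-(t * Real.cos y)) x / (κ * ‖l‖) := by
  rw [resolventKernel, norm_div, norm_hankelKernel]
  exact div_le_div_of_nonneg_left gammaWeight_pos.le
    (mul_pos h.pos (norm_pos_iff.2 h.ne_zero)) (h.mul_norm_le_norm_exp_sub hρ hy x)

lemma differentiableAt_resolventKernel (h : IsSectorSeparated φ κ l) (hρ : ρ ∈ Icc 0 1)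
    (hy : y ∈ Icc (-φ) φ) (t x : ℝ) :
    DifferentiableAt ℂ (resolventKernel l t ρ) (x + y * I) :=
  differentiable_hankelKernel.differentiableAt.div (by fun_prop) (h.exp_sub_ne_zero hρ hy x)

lemma continuous_resolventKernel (h : IsSectorSeparated φ κ l) (hρ : ρ ∈ Icc 0 1)
    (hy : y ∈ Icc (-φ) φ) (t : ℝ) : Continuous fun x : ℝ => resolventKernel l t ρ (x + y * I) :=
  (by fun_prop : Continuous fun x : ℝ => hankelKernel t 1 (x + y * I)).div (by fun_prop)
    (h.exp_sub_ne_zero hρ hy)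

lemma integrable_resolventKernel (h : IsSectorSeparated φ κ l) (hρ : ρ ∈ Icc 0 1)
    (hy : y ∈ Icc (-φ) φ) (ht : 0 < t) (hcos : Real.cos y < 0) :
    Integrable fun x : ℝ => resolventKernel l t ρ (x + y * I) :=
  ((integrable_gammaWeight one_pos (neg_pos.2 (mul_neg_of_pos_of_neg ht hcos))).div_const _).mono'
    (h.continuous_resolventKernel hρ hy t).aestronglyMeasurable
    (ae_of_all _ (h.norm_resolventKernel_le hρ hy t))

lemma stripIntegral_resolventKernel (h : IsSectorSeparated φ κ l) (hρ : ρ ∈ Icc 0 1)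
    (ht : 0 < t) (X : ℝ) :
    stripIntegral φ (resolventKernel l t ρ) = hankelIntegral φ X (resolventKernel l t ρ) := by
  refine stripIntegral_eq_hankelIntegral (B := fun x => gammaWeight 1 (-t) x / (κ * ‖l‖))
    h.angle_pos.le X (fun x y hy => h.differentiableAt_resolventKernel hρ hy t x)
    (fun x _ y hy => (h.norm_resolventKernel_le hρ hy t x).trans ?_) ?_
    (h.integrable_resolventKernel hρ h.neg_angle_mem_Icc ht
      (by rw [Real.cos_neg]; exact h.cos_angle_neg))
    (h.integrable_resolventKernel hρ h.angle_mem_Icc ht h.cos_angle_neg)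
  · exact div_le_div_of_nonneg_right
      (gammaWeight_anti (neg_le_neg (mul_le_of_le_one_right ht.le (Real.cos_le_one y))))
      (mul_nonneg h.pos.le (norm_nonneg l))
  · simpa only [zero_div] using (tendsto_gammaWeight_atBot one_pos (-t)).div_const (κ * ‖l‖)

end IsSectorSeparated

lemma pow_mul_hankelKernel (l : ℂ) (t ρ : ℝ) (w : ℂ) (k : ℕ) :
    l ^ k * hankelKernel t (1 - (ρ * k + ρ)) w =
      hankelKernel t (1 - ρ) w * (l * cexp (-(ρ * w))) ^ k := by
  rw [show 1 - (ρ * k + ρ) = 1 - ρ + -(k * ρ) by ring, hankelKernel_add, mul_pow,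
    ← Complex.exp_nat_mul]
  push_cast
  ring_nf

lemma hasSum_pow_mul_hankelKernel (t : ℝ) (hw : ‖l * cexp (-(ρ * w))‖ < 1) :
    HasSum (fun k : ℕ => l ^ k * hankelKernel t (1 - (ρ * k + ρ)) w)
      (resolventKernel l t ρ w) := by
  have hone : cexp (-(ρ * w)) * cexp (ρ * w) = 1 := by
    rw [← Complex.exp_add, neg_add_cancel, Complex.exp_zero]
  have hkernel : hankelKernel t (1 - ρ) w = hankelKernel t 1 w * cexp (-(ρ * w)) := by
    rw [sub_eq_add_neg, hankelKernel_add, ofReal_neg, neg_mul]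
  simp_rw [pow_mul_hankelKernel]
  convert! (hasSum_geometric_of_norm_lt_one hw).mul_left (hankelKernel t (1 - ρ) w) using 1
  rw [hkernel, resolventKernel, ← div_eq_mul_inv,
    ← mul_div_mul_left _ _ (Complex.exp_ne_zero (-(ρ * w))), mul_sub, hone]
  ring

lemma hasSum_integral_resolventKernel {μ : Measure ℝ} {p : ℝ → ℂ} (hp : Continuous p)
    (hsmall : ∀ᵐ x ∂μ, ‖l * cexp (-(ρ * p x))‖ ≤ 1 / 2)
    (hint : Integrable (fun x => hankelKernel t (1 - ρ) (p x)) μ) :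
    HasSum (fun k : ℕ => l ^ k * ∫ x, hankelKernel t (1 - (ρ * k + ρ)) (p x) ∂μ)
      (∫ x, resolventKernel l t ρ (p x) ∂μ) := by
  simp_rw [← integral_const_mul]
  refine hasSum_integral_of_dominated_convergence
    (fun k x => ‖hankelKernel t (1 - ρ) (p x)‖ * (1 / 2) ^ k)
    (fun k => (by fun_prop : Continuous _).aestronglyMeasurable) (fun k => ?_)
    (ae_of_all _ fun x => summable_geometric_two.mul_left _) ?_ ?_
  · filter_upwards [hsmall] with x hx
    rw [pow_mul_hankelKernel, norm_mul, norm_pow]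
    gcongr
  · simp_rw [tsum_mul_left]
    exact hint.norm.mul_const _
  · filter_upwards [hsmall] with x hx
    exact hasSum_pow_mul_hankelKernel t (hx.trans_lt one_half_lt_one)

lemma norm_mul_exp_neg_le_half (hρ : 0 ≤ ρ) (hX : 2 * ‖l‖ ≤ Real.exp (ρ * X)) (hw : X ≤ w.re) :
    ‖l * cexp (-(ρ * w))‖ ≤ 1 / 2 := by
  have hle : 2 * ‖l‖ ≤ Real.exp (ρ * w.re) :=
    hX.trans (Real.exp_le_exp.2 (mul_le_mul_of_nonneg_left hw hρ))
  rw [norm_mul, norm_exp, neg_re, re_ofReal_mul, Real.exp_neg, ← div_eq_mul_inv,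
    div_le_iff₀ (Real.exp_pos _)]
  linarith

lemma hasSum_hankelIntegral_resolventKernel (hφ : φ ∈ Ioc (π / 2) π) (ht : 0 < t) (hρ : 0 ≤ ρ)
    (hX : 2 * ‖l‖ ≤ Real.exp (ρ * X)) :
    HasSum (fun k : ℕ => l ^ k * hankelIntegral φ X (hankelKernel t (1 - (ρ * k + ρ))))
      (hankelIntegral φ X (resolventKernel l t ρ)) := by
  have hray {y : ℝ} (hy : Real.cos y < 0) := hasSum_integral_resolventKernel (l := l)
    (μ := volume.restrict (Ioi X)) (p := fun x : ℝ => (x : ℂ) + y * I) (by fun_prop)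
    ((ae_restrict_iff' measurableSet_Ioi).2 (ae_of_all _ fun x hx =>
      norm_mul_exp_neg_le_half hρ hX (by simpa using (mem_Ioi.1 hx).le)))
    (integrableOn_Ioi_hankelKernel X ht hy)
  have harc := hasSum_integral_resolventKernel (l := l) (t := t)
    (μ := volume.restrict (Ioc (-φ) φ)) (p := fun y : ℝ => (X : ℂ) + y * I) (by fun_prop)
    (ae_of_all _ fun y => norm_mul_exp_neg_le_half hρ hX (by simp))
    (Continuous.integrableOn_Ioc (by fun_prop))
  have hcos := cos_neg_of_mem_Ioc hφ
  have hle : -φ ≤ φ := by linarith [hφ.1, Real.pi_pos]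
  simp only [hankelIntegral, intervalIntegral.integral_of_le hle, smul_eq_mul]
  convert! ((hray hcos).sub (hray (y := -φ) (by rwa [Real.cos_neg]))).add (harc.mul_left I) using 2
  ring

lemma IsSectorSeparated.two_pi_I_mul_riemannLiouvilleKernel (h : IsSectorSeparated φ κ l)
    (ht : 0 < t) (hρ0 : 0 < ρ) (hρ1 : ρ ≤ 1) :
    2 * π * I * riemannLiouvilleKernel l t ρ = stripIntegral φ (resolventKernel l t ρ) := by
  have hX : Real.exp (ρ * (Real.log (2 * ‖l‖) / ρ)) = 2 * ‖l‖ := by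
    rw [mul_div_cancel₀ _ hρ0.ne', Real.exp_log (mul_pos two_pos (norm_pos_iff.2 h.ne_zero))]
  rw [h.stripIntegral_resolventKernel ⟨hρ0.le, hρ1⟩ ht (Real.log (2 * ‖l‖) / ρ),
    ← (hasSum_hankelIntegral_resolventKernel h.angle_mem ht hρ0.le hX.ge).tsum_eq,
    riemannLiouvilleKernel, mittagLeffler2, ← tsum_mul_left, ← tsum_mul_left]
  refine tsum_congr fun k => ?_
  have hpow : t ^ (-(1 - (ρ * k + ρ))) = (t ^ ρ) ^ k * t ^ (ρ - 1) := by
    rw [← Real.rpow_natCast, ← Real.rpow_mul ht.le, ← Real.rpow_add ht]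
    ring_nf
  rw [hankelIntegral_hankelKernel _ _ ht h.angle_mem, hpow]
  push_cast
  rw [sub_sub_cancel, mul_pow, div_eq_mul_inv]
  ring

end Resolvent

section Remainder

/-- The kernel of `riemannLiouvilleKernel` after the term `-s / l ^ 2` of the expansion
`(s - l)⁻¹ = -l⁻¹ - s / l ^ 2 - ⋯`, at `s = exp (ρ * w)`, has been removed. -/
noncomputable def remainderKernel (l : ℂ) (t ρ : ℝ) (w : ℂ) : ℂ :=
  hankelKernel t 1 w * ((cexp (ρ * w) - l)⁻¹ + cexp (ρ * w) / l ^ 2)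

/-- The partial derivative of `remainderKernel l t ρ w` with respect to `ρ`. -/
noncomputable def remainderKernelDeriv (l : ℂ) (t ρ : ℝ) (w : ℂ) : ℂ :=
  hankelKernel t 1 w * w * (cexp (ρ * w) / l ^ 2 - cexp (ρ * w) / (cexp (ρ * w) - l) ^ 2)

variable {φ κ ρ t y : ℝ} {l w : ℂ}

lemma remainderKernel_eq_add (l : ℂ) (t ρ : ℝ) (w : ℂ) :
    remainderKernel l t ρ w = resolventKernel l t ρ w + hankelKernel t (1 + ρ) w / l ^ 2 := by
  rw [remainderKernel, resolventKernel, hankelKernel_add]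
  ring

lemma hasDerivAt_remainderKernel (t : ℝ) (hw : cexp (ρ * w) - l ≠ 0) :
    HasDerivAt (fun r : ℝ => remainderKernel l t r w) (remainderKernelDeriv l t ρ w) ρ := by
  have hexp : HasDerivAt (fun z : ℂ => cexp (z * w)) (cexp (ρ * w) * (1 * w)) (ρ : ℂ) :=
    ((hasDerivAt_id (ρ : ℂ)).mul_const w).cexp
  refine ((((hexp.sub_const l).inv hw).add (hexp.div_const (l ^ 2))).const_mul
    (hankelKernel t 1 w)).comp_ofReal.congr_deriv ?_
  rw [remainderKernelDeriv]
  ring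

lemma norm_div_sq_sub_div_sub_sq_le {s : ℂ} (hκ : 0 < κ) (hl : l ≠ 0)
    (hs : κ * (‖s‖ + ‖l‖) ≤ ‖s - l‖) :
    ‖s / l ^ 2 - s / (s - l) ^ 2‖ ≤ 2 / (κ ^ 2 * ‖l‖ ^ 3) * ‖s‖ ^ 2 := by
  have hl0 : 0 < ‖l‖ := norm_pos_iff.2 hl
  have hsl : s - l ≠ 0 :=
    norm_pos_iff.1 ((mul_pos hκ (add_pos_of_nonneg_of_pos (norm_nonneg s) hl0)).trans_le hs)
  have hfactor : s / l ^ 2 - s / (s - l) ^ 2 = s ^ 2 * (s - 2 * l) / (l ^ 2 * (s - l) ^ 2) := by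
    field_simp
    ring
  have hnum : ‖s - 2 * l‖ ≤ 2 * (‖s‖ + ‖l‖) := by
    refine (norm_sub_le _ _).trans ?_
    rw [norm_mul, Complex.norm_ofNat]
    linarith [norm_nonneg s]
  rw [hfactor, norm_div, norm_mul, norm_mul, norm_pow, norm_pow, norm_pow]
  calc ‖s‖ ^ 2 * ‖s - 2 * l‖ / (‖l‖ ^ 2 * ‖s - l‖ ^ 2)
      ≤ ‖s‖ ^ 2 * (2 * (‖s‖ + ‖l‖)) / (‖l‖ ^ 2 * (κ * (‖s‖ + ‖l‖)) ^ 2) := by gcongr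
    _ = ‖s‖ ^ 2 * 2 / (‖l‖ ^ 2 * κ ^ 2 * (‖s‖ + ‖l‖)) := by field_simp
    _ ≤ ‖s‖ ^ 2 * 2 / (‖l‖ ^ 2 * κ ^ 2 * ‖l‖) := by
      gcongr
      exact le_add_of_nonneg_left (norm_nonneg s)
    _ = 2 / (κ ^ 2 * ‖l‖ ^ 3) * ‖s‖ ^ 2 := by field_simp

namespace IsSectorSeparated

lemma norm_remainderKernelDeriv_le (h : IsSectorSeparated φ κ l) (hρ : ρ ∈ Icc 0 1)
    (hy : y ∈ Icc (-φ) φ) (t x : ℝ) :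
    ‖remainderKernelDeriv l t ρ (x + y * I)‖ ≤
      2 / (κ ^ 2 * ‖l‖ ^ 3) * (gammaWeight (1 + 2 * ρ) (t * -Real.cos y) x * (|x| + π)) := by
  have hsep := h.le_norm_exp_sub hρ hy x
  rw [← norm_exp_ofReal_mul_add_mul_I ρ x y] at hsep
  have hfactor := norm_div_sq_sub_div_sub_sq_le h.pos h.ne_zero hsep
  have hw : ‖(x : ℂ) + y * I‖ ≤ |x| + π := by
    refine (norm_add_le _ _).trans ?_
    rw [norm_mul, norm_I, mul_one, norm_real, norm_real, Real.norm_eq_abs, Real.norm_eq_abs]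
    exact add_le_add_right ((abs_le.2 hy).trans h.angle_mem.2) _
  have hexp : Real.exp (ρ * x) ^ 2 = Real.exp (2 * ρ * x) := by
    rw [← Real.exp_nat_mul]
    push_cast
    ring_nf
  rw [norm_exp_ofReal_mul_add_mul_I, hexp] at hfactor
  rw [remainderKernelDeriv, norm_mul, norm_mul, norm_hankelKernel, ← mul_neg, gammaWeight_add]
  calc gammaWeight 1 (t * -Real.cos y) x * ‖(x : ℂ) + y * I‖ * _
      ≤ gammaWeight 1 (t * -Real.cos y) x * (|x| + π) *
          (2 / (κ ^ 2 * ‖l‖ ^ 3) * Real.exp (2 * ρ * x)) :=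
        mul_le_mul (mul_le_mul_of_nonneg_left hw gammaWeight_pos.le) hfactor (norm_nonneg _)
          (mul_nonneg gammaWeight_pos.le (by positivity))
    _ = _ := by ring

lemma integrable_remainderKernel (h : IsSectorSeparated φ κ l) (hρ : ρ ∈ Icc 0 1)
    (hy : y ∈ Icc (-φ) φ) (ht : 0 < t) (hcos : Real.cos y < 0) :
    Integrable fun x : ℝ => remainderKernel l t ρ (x + y * I) := by
  simp only [remainderKernel_eq_add]
  exact (h.integrable_resolventKernel hρ hy ht hcos).add
    ((integrable_hankelKernel ht (by linarith [hρ.1]) hcos).div_const _)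

lemma continuous_remainderKernelDeriv (h : IsSectorSeparated φ κ l) (hρ : ρ ∈ Icc 0 1)
    (hy : y ∈ Icc (-φ) φ) (t : ℝ) :
    Continuous fun x : ℝ => remainderKernelDeriv l t ρ (x + y * I) := by
  have hexp : Continuous fun x : ℝ => cexp (ρ * (x + y * I)) := by fun_prop
  exact (by fun_prop : Continuous fun x : ℝ => hankelKernel t 1 (x + y * I) * (x + y * I)).mul
    ((hexp.div_const _).sub (hexp.div ((hexp.sub continuous_const).pow 2)
      fun x => pow_ne_zero 2 (h.exp_sub_ne_zero hρ hy x)))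

lemma hasDerivAt_integral_remainderKernel (h : IsSectorSeparated φ κ l) (hρ : ρ ∈ Ioo 0 1)
    (hy : y ∈ Icc (-φ) φ) (ht : 0 < t) (hcos : Real.cos y < 0) :
    HasDerivAt (fun r : ℝ => ∫ x : ℝ, remainderKernel l t r (x + y * I))
      (∫ x : ℝ, remainderKernelDeriv l t ρ (x + y * I)) ρ := by
  have hc : 0 < t * -Real.cos y := mul_pos ht (neg_pos.2 hcos)
  have hmem : Ioo (0 : ℝ) 1 ∈ 𝓝 ρ := Ioo_mem_nhds hρ.1 hρ.2
  refine (hasDerivAt_integral_of_dominated_loc_of_deriv_le (𝕜 := ℝ) (μ := volume)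
    (F := fun (r : ℝ) (x : ℝ) => remainderKernel l t r (x + y * I))
    (F' := fun (r : ℝ) (x : ℝ) => remainderKernelDeriv l t r (x + y * I)) (s := Ioo 0 1) hmem
    (mem_of_superset hmem fun r hr => (h.integrable_remainderKernel
      (Ioo_subset_Icc_self hr) hy ht hcos).aestronglyMeasurable)
    (h.integrable_remainderKernel (Ioo_subset_Icc_self hρ) hy ht hcos)
    (h.continuous_remainderKernelDeriv (Ioo_subset_Icc_self hρ) hy t).aestronglyMeasurable
    (ae_of_all _ fun x r hr =>
      (h.norm_remainderKernelDeriv_le (Ioo_subset_Icc_self hr) hy t x).trans ?_)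
    (((integrable_gammaWeight_mul_abs_add_pi one_pos hc).add
      (integrable_gammaWeight_mul_abs_add_pi three_pos hc)).const_mul (2 / (κ ^ 2 * ‖l‖ ^ 3)))
    (ae_of_all _ fun x r hr =>
      hasDerivAt_remainderKernel t (h.exp_sub_ne_zero (Ioo_subset_Icc_self hr) hy x))).2
  refine mul_le_mul_of_nonneg_left ?_ (by positivity)
  rw [Pi.add_apply, ← add_mul]
  exact mul_le_mul_of_nonneg_right
    (gammaWeight_le_add (by linarith [hr.1]) (by linarith [hr.2])) (by positivity)

lemma norm_integral_remainderKernelDeriv_le (h : IsSectorSeparated φ κ l) (hρ : ρ ∈ Icc 0 1)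
    (hy : y ∈ Icc (-φ) φ) (ht : 1 ≤ t) (hcos : Real.cos y < 0) :
    ‖∫ x : ℝ, remainderKernelDeriv l t ρ (x + y * I)‖ ≤
      2 / (κ ^ 2 * ‖l‖ ^ 3) * (t ^ (-(1 + 2 * ρ)) * (1 + Real.log t) *
        (logMoment 1 (-Real.cos y) + logMoment 3 (-Real.cos y))) := by
  have ht0 : 0 < t := one_pos.trans_le ht
  have hc : 0 < -Real.cos y := neg_pos.2 hcos
  have ha : 0 < 1 + 2 * ρ := by linarith [hρ.1]
  have hbound := norm_integral_le_of_norm_le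
    ((integrable_gammaWeight_mul_abs_add_pi ha (mul_pos ht0 hc)).const_mul
      (2 / (κ ^ 2 * ‖l‖ ^ 3)))
    (ae_of_all _ (h.norm_remainderKernelDeriv_le hρ hy t))
  rw [integral_const_mul] at hbound
  refine hbound.trans (mul_le_mul_of_nonneg_left ?_ (by positivity))
  refine (logMoment_mul_le ha hc ht).trans (mul_le_mul_of_nonneg_left ?_
    (mul_nonneg (Real.rpow_nonneg ht0.le _) (by linarith [Real.log_nonneg ht])))
  exact logMoment_le_add one_pos hc (by linarith [hρ.1]) (by linarith [hρ.2])

lemma hasDerivAt_stripIntegral_remainderKernel (h : IsSectorSeparated φ κ l) (hρ : ρ ∈ Ioo 0 1)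
    (ht : 0 < t) :
    HasDerivAt (fun r => stripIntegral φ (remainderKernel l t r))
      (stripIntegral φ (remainderKernelDeriv l t ρ)) ρ :=
  (h.hasDerivAt_integral_remainderKernel hρ h.angle_mem_Icc ht h.cos_angle_neg).sub
    (h.hasDerivAt_integral_remainderKernel hρ h.neg_angle_mem_Icc ht
      (by rw [Real.cos_neg]; exact h.cos_angle_neg))

lemma norm_stripIntegral_remainderKernelDeriv_le (h : IsSectorSeparated φ κ l)
    (hρ : ρ ∈ Icc 0 1) (ht : 1 ≤ t) :
    ‖stripIntegral φ (remainderKernelDeriv l t ρ)‖ ≤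
      2 * (2 / (κ ^ 2 * ‖l‖ ^ 3) * (t ^ (-(1 + 2 * ρ)) * (1 + Real.log t) *
        (logMoment 1 (-Real.cos φ) + logMoment 3 (-Real.cos φ)))) := by
  have hupper := h.norm_integral_remainderKernelDeriv_le hρ h.angle_mem_Icc ht h.cos_angle_neg
  have hlower := h.norm_integral_remainderKernelDeriv_le hρ h.neg_angle_mem_Icc ht
    (by rw [Real.cos_neg]; exact h.cos_angle_neg)
  rw [Real.cos_neg] at hlower
  rw [two_mul]
  exact (norm_sub_le _ _).trans (add_le_add hupper hlower)

lemma integral_remainderKernel (h : IsSectorSeparated φ κ l) (hρ : ρ ∈ Icc 0 1)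
    (hy : y ∈ Icc (-φ) φ) (ht : 0 < t) (hcos : Real.cos y < 0) :
    ∫ x : ℝ, remainderKernel l t ρ (x + y * I) =
      (∫ x : ℝ, resolventKernel l t ρ (x + y * I)) +
        (∫ x : ℝ, hankelKernel t (1 + ρ) (x + y * I)) / l ^ 2 := by
  simp only [remainderKernel_eq_add]
  rw [integral_add (h.integrable_resolventKernel hρ hy ht hcos)
    ((integrable_hankelKernel ht (by linarith [hρ.1]) hcos).div_const _), integral_div]

lemma stripIntegral_remainderKernel (h : IsSectorSeparated φ κ l) (hρ : ρ ∈ Icc 0 1)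
    (ht : 0 < t) :
    stripIntegral φ (remainderKernel l t ρ) =
      stripIntegral φ (resolventKernel l t ρ) +
        stripIntegral φ (hankelKernel t (1 + ρ)) / l ^ 2 := by
  rw [stripIntegral, h.integral_remainderKernel hρ h.angle_mem_Icc ht h.cos_angle_neg,
    h.integral_remainderKernel hρ h.neg_angle_mem_Icc ht
      (by rw [Real.cos_neg]; exact h.cos_angle_neg), stripIntegral, stripIntegral]
  ring

end IsSectorSeparated

lemma stripIntegral_hankelKernel_one_add (hφ : φ ∈ Ioc (π / 2) π) (ht : 0 < t) (hρ : -1 < ρ) :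
    stripIntegral φ (hankelKernel t (1 + ρ)) = -(2 * π * I * (leadingTerm t ρ : ℝ)) := by
  have hgamma := one_div_Gamma_eq_self_mul_one_div_Gamma_add_one (-ρ : ℂ)
  rw [neg_add_eq_sub] at hgamma
  rw [stripIntegral_hankelKernel ht (by linarith) hφ, leadingTerm,
    show (1 - (1 + ρ : ℝ) : ℂ) = -ρ by push_cast; ring, hgamma]
  push_cast [← Complex.Gamma_ofReal]
  ring

lemma IsSectorSeparated.riemannLiouvilleKernel_eq (h : IsSectorSeparated φ κ l) (hρ0 : 0 < ρ)
    (hρ1 : ρ ≤ 1) (ht : 0 < t) :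
    riemannLiouvilleKernel l t ρ =
      (2 * π * I)⁻¹ * stripIntegral φ (remainderKernel l t ρ) +
        (l ^ 2)⁻¹ * (leadingTerm t ρ : ℝ) := by
  have hl := h.ne_zero
  rw [h.stripIntegral_remainderKernel ⟨hρ0.le, hρ1⟩ ht,
    ← h.two_pi_I_mul_riemannLiouvilleKernel ht hρ0 hρ1,
    stripIntegral_hankelKernel_one_add h.angle_mem ht (by linarith)]
  field_simp [two_pi_I_ne_zero]
  ring

lemma IsSectorSeparated.hasDerivAt_riemannLiouvilleKernel (h : IsSectorSeparated φ κ l)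
    (hρ : ρ ∈ Ioo 0 1) (ht : 0 < t) :
    HasDerivAt (riemannLiouvilleKernel l t)
      ((2 * π * I)⁻¹ * stripIntegral φ (remainderKernelDeriv l t ρ) +
        (l ^ 2)⁻¹ * (deriv (leadingTerm t) ρ : ℝ)) ρ := by
  have hlead := (hasDerivAt_leadingTerm ht hρ.2).differentiableAt.hasDerivAt.ofReal_comp
  refine (((h.hasDerivAt_stripIntegral_remainderKernel hρ ht).const_mul _).add
    (hlead.const_mul _)).congr_of_eventuallyEq ?_
  filter_upwards [Ioo_mem_nhds hρ.1 hρ.2] with r hr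
  exact h.riemannLiouvilleKernel_eq hr.1 hr.2.le ht

end Remainder

section Estimate

lemma realSign_mul_self (x : ℝ) : Real.sign x * x = |x| := by
  rcases lt_trichotomy x 0 with hx | rfl | hx
  · rw [Real.sign_of_neg hx, abs_of_neg hx, neg_one_mul]
  · rw [mul_zero, abs_zero]
  · rw [Real.sign_of_pos hx, abs_of_pos hx, one_mul]

lemma realSign_mul_le_abs (x y : ℝ) : Real.sign x * y ≤ |y| := by
  obtain hx | hx | hx := Real.sign_apply_eq x <;> rw [hx]
  · rw [neg_one_mul]
    exact neg_le_abs y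
  · rw [zero_mul]
    exact abs_nonneg y
  · rw [one_mul]
    exact le_abs_self y

lemma re_inv_sq (z : ℂ) : ((z ^ 2)⁻¹).re = ((-z.re) ^ 2 - z.im ^ 2) / ‖z‖ ^ 4 := by
  rw [inv_re, map_pow, normSq_eq_norm_sq, ← pow_mul]
  congr 1
  rw [sq, mul_re]
  ring

variable {φ κ ρ t : ℝ} {l : ℂ}

lemma realSign_mul_re_inv_sq_mul_deriv_leadingTerm_le (l : ℂ) (ht : 0 < t) (hρ : ρ ∈ Ioo 0 1)
    (hlog : 1 - Real.eulerMascheroniConstant + 2 / ρ ≤ Real.log t) :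
    Real.sign ((-l.re) ^ 2 - l.im ^ 2) * ((l ^ 2)⁻¹ * (deriv (leadingTerm t) ρ : ℝ)).re ≤
      -|(-l.re) ^ 2 - l.im ^ 2| / (‖l‖ ^ 4 * t ^ (ρ + 1)) := by
  rw [re_mul_ofReal, re_inv_sq]
  set σ := (-l.re) ^ 2 - l.im ^ 2
  calc Real.sign σ * (σ / ‖l‖ ^ 4 * deriv (leadingTerm t) ρ)
      = |σ| / ‖l‖ ^ 4 * deriv (leadingTerm t) ρ := by
        rw [← mul_assoc, ← mul_div_assoc, realSign_mul_self]
    _ ≤ |σ| / ‖l‖ ^ 4 * -t ^ (-(1 + ρ)) :=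
        mul_le_mul_of_nonneg_left (deriv_leadingTerm_le ht hρ.1 hρ.2 hlog) (by positivity)
    _ = -|σ| / (‖l‖ ^ 4 * t ^ (ρ + 1)) := by
        rw [add_comm 1 ρ, Real.rpow_neg ht.le, mul_neg, ← div_eq_mul_inv, div_div, neg_div]

namespace IsSectorSeparated

lemma norm_inv_two_pi_I_mul_stripIntegral_le (h : IsSectorSeparated φ κ l)
    (hρ : ρ ∈ Ioo 0 1) (ht : 1 ≤ t) :
    ‖(2 * π * I)⁻¹ * stripIntegral φ (remainderKernelDeriv l t ρ)‖ ≤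
      2 / κ ^ 2 * (logMoment 1 (-Real.cos φ) + logMoment 3 (-Real.cos φ)) *
        (1 / ρ + Real.log t) / (‖l‖ ^ 3 * t ^ (2 * ρ + 1)) := by
  have ht0 : 0 < t := one_pos.trans_le ht
  have hM : 0 ≤ logMoment 1 (-Real.cos φ) + logMoment 3 (-Real.cos φ) :=
    add_nonneg (logMoment_nonneg _ _) (logMoment_nonneg _ _)
  have hlog : 1 + Real.log t ≤ 1 / ρ + Real.log t :=
    add_le_add_left ((one_le_div hρ.1).2 hρ.2.le) _
  have hnorm : 2 ≤ ‖(2 * π * I : ℂ)‖ := by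
    rw [norm_mul, norm_mul, norm_I, norm_real, Complex.norm_ofNat,
      Real.norm_of_nonneg Real.pi_nonneg]
    linarith [Real.pi_gt_three]
  have hstrip := h.norm_stripIntegral_remainderKernelDeriv_le (Ioo_subset_Icc_self hρ) ht
  rw [norm_mul, norm_inv, inv_mul_le_iff₀ (two_pos.trans_le hnorm)]
  refine hstrip.trans (mul_le_mul hnorm ?_ (by have := Real.log_nonneg ht; positivity)
    (norm_nonneg _))
  set M := logMoment 1 (-Real.cos φ) + logMoment 3 (-Real.cos φ)
  calc 2 / (κ ^ 2 * ‖l‖ ^ 3) * (t ^ (-(1 + 2 * ρ)) * (1 + Real.log t) * M)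
      = 2 / κ ^ 2 * M * (1 + Real.log t) / (‖l‖ ^ 3 * t ^ (2 * ρ + 1)) := by
        rw [add_comm 1 (2 * ρ), Real.rpow_neg ht0.le]
        field_simp
    _ ≤ 2 / κ ^ 2 * M * (1 / ρ + Real.log t) / (‖l‖ ^ 3 * t ^ (2 * ρ + 1)) := by gcongr

theorem realSign_mul_re_deriv_riemannLiouvilleKernel_le (h : IsSectorSeparated φ κ l)
    (hρ : ρ ∈ Ioo 0 1) (ht : 1 ≤ t)
    (hlog : 1 - Real.eulerMascheroniConstant + 2 / ρ ≤ Real.log t) :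
    Real.sign ((-l.re) ^ 2 - l.im ^ 2) * (deriv (riemannLiouvilleKernel l t) ρ).re ≤
      -|(-l.re) ^ 2 - l.im ^ 2| / (‖l‖ ^ 4 * t ^ (ρ + 1)) +
        2 / κ ^ 2 * (logMoment 1 (-Real.cos φ) + logMoment 3 (-Real.cos φ)) *
          (1 / ρ + Real.log t) / (‖l‖ ^ 3 * t ^ (2 * ρ + 1)) := by
  have ht0 : 0 < t := one_pos.trans_le ht
  rw [(h.hasDerivAt_riemannLiouvilleKernel hρ ht0).deriv, add_re, mul_add, add_comm]
  refine add_le_add (realSign_mul_re_inv_sq_mul_deriv_leadingTerm_le l ht0 hρ hlog) ?_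
  exact (realSign_mul_le_abs _ _).trans
    ((abs_re_le_norm _).trans (h.norm_inv_two_pi_I_mul_stripIntegral_le hρ ht))

end IsSectorSeparated

lemma one_sub_eulerMascheroniConstant_add_two_div_le_log
    (ht : Real.exp (1 - Real.eulerMascheroniConstant) * Real.exp (2 / ρ) ≤ t) :
    1 - Real.eulerMascheroniConstant + 2 / ρ ≤ Real.log t := by
  rw [← Real.exp_add] at ht
  exact (Real.le_log_iff_exp_le ((Real.exp_pos _).trans_le ht)).2 ht

lemma one_le_of_exp_one_sub_eulerMascheroniConstant_mul_le (hρ : 0 ≤ ρ)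
    (ht : Real.exp (1 - Real.eulerMascheroniConstant) * Real.exp (2 / ρ) ≤ t) : 1 ≤ t := by
  have hγ : Real.eulerMascheroniConstant ≤ 1 := by
    linarith [Real.eulerMascheroniConstant_lt_two_thirds]
  exact (one_le_mul_of_one_le_of_one_le (Real.one_le_exp (sub_nonneg.2 hγ))
    (Real.one_le_exp (by positivity))).trans ht

end Estimate

theorem riemann_liouville_derivative_estimate_general {m : ℝ} (hm : 0 < m) :
    ∃ C : ℝ, 0 < C ∧ ∀ l : ℂ, l ≠ 0 → m * ‖l‖ ≤ -l.re → ∀ ρ ∈ Ioo (0 : ℝ) 1, ∀ t₀ : ℝ,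
      Real.exp (1 - Real.eulerMascheroniConstant) * Real.exp (2 / ρ) ≤ t₀ →
        DifferentiableAt ℝ (riemannLiouvilleKernel l t₀) ρ ∧
        Real.sign ((-l.re) ^ 2 - l.im ^ 2) * (deriv (riemannLiouvilleKernel l t₀) ρ).re ≤
          -|(-l.re) ^ 2 - l.im ^ 2| / (‖l‖ ^ 4 * t₀ ^ (ρ + 1)) +
            C * (1 / ρ + Real.log t₀) / (‖l‖ ^ 3 * t₀ ^ (2 * ρ + 1)) := by
  set φ := Real.arccos (-(m / 2))
  set C := 2 / (m / 10) ^ 2 * (logMoment 1 (-Real.cos φ) + logMoment 3 (-Real.cos φ))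
  have hC : 0 ≤ C :=
    mul_nonneg (by positivity) (add_nonneg (logMoment_nonneg _ _) (logMoment_nonneg _ _))
  refine ⟨C + 1, by positivity, fun l hl hre ρ hρ t ht => ?_⟩
  have hsep : IsSectorSeparated φ (m / 10) l := isSectorSeparated_of_mul_norm_le_neg_re hm hl hre
  have ht1 : 1 ≤ t := one_le_of_exp_one_sub_eulerMascheroniConstant_mul_le hρ.1.le ht
  have hlog := one_sub_eulerMascheroniConstant_add_two_div_le_log ht
  have hlog0 : 0 ≤ 1 / ρ + Real.log t :=
    add_nonneg (one_div_nonneg.2 hρ.1.le) (Real.log_nonneg ht1)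
  refine ⟨(hsep.hasDerivAt_riemannLiouvilleKernel hρ (one_pos.trans_le ht1)).differentiableAt,
    (hsep.realSign_mul_re_deriv_riemannLiouvilleKernel_le hρ ht1 hlog).trans ?_⟩
  gcongr
  exact le_add_of_nonneg_right zero_le_one

/-- **Key derivative estimate, Riemann-Liouville case.** For `0 < β₀ < 1`,
`Re λ < 0` and `|Re λ| ≠ |Im λ|`, there is `C > 0` such that for every
`t₀ ≥ e^{1−γ} e^{2/β₀}` and `ρ ∈ [β₀, 1)` the map
`ρ ↦ t₀^{ρ−1} E_{ρ,ρ}(λ t₀^ρ)` is differentiable at `ρ` and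
`sign(λ₁² − λ₂²) · Re (d/dρ [t₀^{ρ−1} E_{ρ,ρ}(λ t₀^ρ)]) ≤
  −|λ₁² − λ₂²|/(|λ|⁴ t₀^{ρ+1}) + C (1/ρ + ln t₀)/(|λ|³ t₀^{2ρ+1})`,
where `λ₁ = −Re λ` and `λ₂ = Im λ`. -/
theorem riemann_liouville_derivative_estimate (β₀ : ℝ) (hβ₀ : 0 < β₀) (hβ₀1 : β₀ < 1)
    (l : ℂ) (hl : l.re < 0) (hl' : |l.re| ≠ |l.im|) :
    ∃ C : ℝ, 0 < C ∧ ∀ t₀ : ℝ,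
      Real.exp (1 - Real.eulerMascheroniConstant) * Real.exp (2 / β₀) ≤ t₀ →
      ∀ ρ ∈ Set.Ico β₀ 1,
        DifferentiableAt ℝ (fun ρ : ℝ =>
          ((t₀ ^ (ρ - 1) : ℝ) : ℂ) * mittagLeffler2 ρ (l * ((t₀ ^ ρ : ℝ) : ℂ))) ρ ∧
        Real.sign ((-l.re) ^ 2 - l.im ^ 2) *
            (deriv (fun ρ : ℝ =>
              ((t₀ ^ (ρ - 1) : ℝ) : ℂ) *
                mittagLeffler2 ρ (l * ((t₀ ^ ρ : ℝ) : ℂ))) ρ).re ≤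
          -|(-l.re) ^ 2 - l.im ^ 2| / (‖l‖ ^ 4 * t₀ ^ (ρ + 1)) +
            C * (1 / ρ + Real.log t₀) / (‖l‖ ^ 3 * t₀ ^ (2 * ρ + 1)) := by
  have hl0 : l ≠ 0 := fun h => hl.ne (by rw [h, zero_re])
  have hm : 0 < -l.re / ‖l‖ := div_pos (neg_pos.2 hl) (norm_pos_iff.2 hl0)
  obtain ⟨C, hC, hbound⟩ := riemann_liouville_derivative_estimate_general hm
  refine ⟨C, hC, fun t₀ ht ρ hρ => hbound l hl0 (div_mul_cancel₀ _ (norm_ne_zero_iff.2 hl0)).le ρ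
    ⟨hβ₀.trans_le hρ.1, hρ.2⟩ t₀ (le_trans ?_ ht)⟩
  gcongr
  exact hρ.1
end
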